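/- arXiv:2010.08284 — 9 statements merged into one kernel-verified Lean document; each statement's English description precedes it below -/
import Mathlib

section
/- Let λ ∈ ℝ and let η be a finite non-negative Borel measure on (0,∞) with ∫_{(0,∞)} t² dη(t) < ∞, and define h : {z ∈ ℂ : Re z ≥ 0} → ℂ by h(z) = z + λ − ∫_{(0,∞)} e^{−zt} dη(t). If h(z) ≠ 0 for every z ∈ ℂ with Re z ≥ 0, then the function x ↦ 1/h(x) is completely monotone on (0,∞), i.e. it is infinitely differentiable on (0,∞) and (−1)ⁿ (dⁿ/dxⁿ)(1/h)(x) ≥ 0 for all x > 0 and all integers n ≥ 0. -/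
/-!
Write `H x = x + λ - L x` with `L x = ∫ e^{-xt} dη(t)`, the moment generating function of
`t ↦ -t` under `η`. On `(0,∞)` the function `H` is smooth and positive (`denominator_pos`): it
is nonnegative for large `x`, and by the intermediate value theorem a value `≤ 0` would produce a
zero of `h` on the positive half-line. Its derivative `H' = 1 - L'` is completely monotone
(`completely_monotone_one_sub`), since `(-1)^k L^{(k)}(x) = ∫ t^k e^{-xt} dη(t) ≥ 0`.
Finally `f = 1/H` satisfies `-f' = H' f f`, so by strong induction on `n` and the Leibniz rule
(`alternating_mul`), the sign condition for the derivatives of `f` of order `≤ n` gives that of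
order `n + 1`.
-/

open MeasureTheory

/-- The Laplace transform `x ↦ ∫ e^{-xt} dη(t)`, encoded as the moment generating function of
`t ↦ -t`. -/
noncomputable def laplace (η : Measure ℝ) : ℝ → ℝ :=
  ProbabilityTheory.mgf (fun t : ℝ => -t) η

lemma laplace_apply (η : Measure ℝ) (x : ℝ) :
    laplace η x = ∫ t : ℝ, Real.exp (-(x * t)) ∂η := by
  simp [laplace, ProbabilityTheory.mgf]

lemma ae_pos {η : Measure ℝ} (hconc : η (Set.Ioi (0 : ℝ))ᶜ = 0) : ∀ᵐ t ∂η, 0 < t := hconc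

lemma exp_le_one_ae {η : Measure ℝ} (hconc : η (Set.Ioi (0 : ℝ))ᶜ = 0) {x : ℝ} (hx : 0 < x) :
    ∀ᵐ t ∂η, Real.exp (-(x * t)) ≤ 1 := by
  filter_upwards [ae_pos hconc] with t ht
  exact Real.exp_le_one_iff.mpr (by nlinarith)

lemma integrable_exp_neg {η : Measure ℝ} [IsFiniteMeasure η]
    (hconc : η (Set.Ioi (0 : ℝ))ᶜ = 0) {x : ℝ} (hx : 0 < x) :
    Integrable (fun t : ℝ => Real.exp (-(x * t))) η := by
  refine (integrable_const (1 : ℝ)).mono' (by fun_prop) ?_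
  filter_upwards [exp_le_one_ae hconc hx] with t ht
  rwa [Real.norm_of_nonneg (Real.exp_pos _).le]

lemma mem_interior_integrableExpSet {η : Measure ℝ} [IsFiniteMeasure η]
    (hconc : η (Set.Ioi (0 : ℝ))ᶜ = 0) {x : ℝ} (hx : 0 < x) :
    x ∈ interior (ProbabilityTheory.integrableExpSet (fun t : ℝ => -t) η) := by
  refine mem_interior.mpr ⟨Set.Ioi 0, fun y hy => ?_, isOpen_Ioi, hx⟩
  have := integrable_exp_neg hconc (show 0 < y from hy)
  simpa [ProbabilityTheory.integrableExpSet] using this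

lemma contDiffAt_laplace {η : Measure ℝ} [IsFiniteMeasure η]
    (hconc : η (Set.Ioi (0 : ℝ))ᶜ = 0) {x : ℝ} (hx : 0 < x) (n : WithTop ℕ∞) :
    ContDiffAt ℝ n (laplace η) x :=
  (ProbabilityTheory.analyticAt_mgf (mem_interior_integrableExpSet hconc hx)).contDiffAt

lemma laplace_alternating {η : Measure ℝ} [IsFiniteMeasure η]
    (hconc : η (Set.Ioi (0 : ℝ))ᶜ = 0) (n : ℕ) {x : ℝ} (hx : 0 < x) :
    0 ≤ (-1 : ℝ) ^ n * iteratedDeriv n (laplace η) x := by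
  rw [laplace, ProbabilityTheory.iteratedDeriv_mgf (mem_interior_integrableExpSet hconc hx),
    ← integral_const_mul]
  refine integral_nonneg_of_ae ?_
  filter_upwards [ae_pos hconc] with t ht
  have : (-1 : ℝ) ^ n * ((-t) ^ n * Real.exp (x * -t)) = t ^ n * Real.exp (x * -t) := by
    rw [← mul_assoc, ← mul_pow]
    simp
  simp only [Pi.zero_apply]
  rw [this]
  positivity

/-- The derivative `1 - L'` of the denominator `x + λ - L x` is completely monotone. -/
lemma completely_monotone_one_sub {η : Measure ℝ} [IsFiniteMeasure η]
    (hconc : η (Set.Ioi (0 : ℝ))ᶜ = 0) (n : ℕ) {x : ℝ} (hx : 0 < x) :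
    0 ≤ (-1 : ℝ) ^ n * iteratedDeriv n (fun y => 1 - deriv (laplace η) y) x := by
  have key := laplace_alternating hconc (n + 1) hx
  rw [iteratedDeriv_succ', pow_succ] at key
  rcases Nat.eq_zero_or_pos n with rfl | hn
  · simp at key ⊢
    linarith
  · rw [iteratedDeriv_const_sub hn, iteratedDeriv_neg]
    linarith

/-- The sign condition of complete monotonicity up to order `n`, at a point, is stable under
products, by the Leibniz rule. -/
lemma alternating_mul {u v : ℝ → ℝ} {n : ℕ} {x : ℝ}
    (hu : ContDiffAt ℝ n u x) (hv : ContDiffAt ℝ n v x)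
    (hu' : ∀ k ≤ n, 0 ≤ (-1 : ℝ) ^ k * iteratedDeriv k u x)
    (hv' : ∀ k ≤ n, 0 ≤ (-1 : ℝ) ^ k * iteratedDeriv k v x) :
    0 ≤ (-1 : ℝ) ^ n * iteratedDeriv n (u * v) x := by
  rw [iteratedDeriv_mul hu hv, Finset.mul_sum]
  refine Finset.sum_nonneg fun i hi => ?_
  have hi : i ≤ n := Nat.lt_succ_iff.mp (Finset.mem_range.mp hi)
  have h1 : (-1 : ℝ) ^ n = (-1) ^ i * (-1) ^ (n - i) := by
    rw [← pow_add, Nat.add_sub_cancel' hi]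
  have h2 := mul_nonneg (Nat.cast_nonneg (α := ℝ) (n.choose i))
    (mul_nonneg (hu' i hi) (hv' (n - i) (Nat.sub_le _ _)))
  rw [h1]
  convert h2 using 1
  ring

/-- A zero-free denominator is positive on `(0,∞)`: it is nonnegative at every
`b ≥ η(ℝ) - λ`, because `L ≤ η(ℝ)`. -/
lemma denominator_pos {η : Measure ℝ} [IsFiniteMeasure η]
    (hconc : η (Set.Ioi (0 : ℝ))ᶜ = 0) {lam : ℝ}
    (hne : ∀ x : ℝ, 0 < x → x + lam - laplace η x ≠ 0) {x : ℝ} (hx : 0 < x) :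
    0 < x + lam - laplace η x := by
  by_contra hle
  push Not at hle
  set b := max x (η.real Set.univ - lam) with hb
  have hxb : x ≤ b := le_max_left _ _
  have hLb : laplace η b ≤ η.real Set.univ := by
    rw [laplace_apply]
    calc _ ≤ ∫ _ : ℝ, (1 : ℝ) ∂η :=
          integral_mono_ae (integrable_exp_neg hconc (hx.trans_le hxb)) (integrable_const _)
            (exp_le_one_ae hconc (hx.trans_le hxb))
      _ = _ := by simp
  have hHb : 0 ≤ b + lam - laplace η b := by
    have : η.real Set.univ - lam ≤ b := le_max_right _ _
    linarith
  have hcont : ContinuousOn (fun y => y + lam - laplace η y) (Set.Icc x b) := by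
    refine ContinuousOn.sub (by fun_prop) fun y hy => ?_
    exact (contDiffAt_laplace hconc (hx.trans_le hy.1) 0).continuousAt.continuousWithinAt
  obtain ⟨y, hy, hy0⟩ := intermediate_value_Icc hxb hcont ⟨hle, hHb⟩
  exact hne y (hx.trans_le hy.1) hy0

/-- If `h(z) = z + λ − ∫_{(0,∞)} e^{−zt} dη(t)` has no zero on `{Re z ≥ 0}`, where `η` is a
finite non-negative measure on `(0,∞)` with finite second moment, then `x ↦ 1/h(x)` is
completely monotone on `(0,∞)`. -/
theorem stmt0
    (lam : ℝ) (η : Measure ℝ) [IsFiniteMeasure η]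
    (hconc : η (Set.Ioi (0 : ℝ))ᶜ = 0)
    (hmom : Integrable (fun t : ℝ => t ^ 2) η)
    (h : ℂ → ℂ)
    (hdef : ∀ z : ℂ, h z = z + (lam : ℂ) - ∫ t : ℝ, Complex.exp (-(z * (t : ℂ))) ∂η)
    (hne : ∀ z : ℂ, 0 ≤ z.re → h z ≠ 0)
    (f : ℝ → ℝ)
    (hf : ∀ x : ℝ, f x = 1 / (x + lam - ∫ t : ℝ, Real.exp (-(x * t)) ∂η)) :
    ContDiffOn ℝ (⊤ : ℕ∞) f (Set.Ioi 0) ∧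
      ∀ (n : ℕ) (x : ℝ), 0 < x → 0 ≤ (-1 : ℝ) ^ n * iteratedDeriv n f x := by
  have hH : ∀ x : ℝ, 0 < x → x + lam - laplace η x ≠ 0 := by
    intro x hx h0
    apply hne (x : ℂ) (by simpa using hx.le)
    have hint : ∫ t : ℝ, Complex.exp (-((x : ℂ) * (t : ℂ))) ∂η = (laplace η x : ℂ) := by
      rw [laplace_apply, ← integral_complex_ofReal]
      push_cast
      rfl
    rw [hdef, hint]
    exact_mod_cast h0
  have hf' : f = fun x => (x + lam - laplace η x)⁻¹ := by
    funext x
    rw [hf, laplace_apply, one_div]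
  have hsmooth : ∀ (n : WithTop ℕ∞) (x : ℝ), 0 < x → ContDiffAt ℝ n f x := by
    intro n x hx
    rw [hf']
    exact ((contDiffAt_id.add contDiffAt_const).sub (contDiffAt_laplace hconc hx n)).inv (hH x hx)
  refine ⟨fun x hx => (hsmooth _ x hx).contDiffWithinAt, fun n => ?_⟩
  have hderiv : ∀ x : ℝ, 0 < x →
      deriv f x = -((fun y => 1 - deriv (laplace η) y) * (f * f)) x := by
    intro x hx
    have hL : HasDerivAt (laplace η) (deriv (laplace η) x) x :=
      ((contDiffAt_laplace hconc hx 1).differentiableAt (by norm_num)).hasDerivAt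
    have hd := (((hasDerivAt_id x).add_const lam).sub hL).inv (hH x hx)
    rw [hf']
    refine hd.deriv.trans ?_
    simp only [Pi.mul_apply, Pi.sub_apply, id]
    have := hH x hx
    field_simp
  induction n using Nat.strong_induction_on with
  | _ n ih =>
    intro x hx
    rcases n with _ | n
    · have := denominator_pos hconc hH hx
      simp only [pow_zero, one_mul, iteratedDeriv_zero, hf']
      positivity
    · have hev : deriv f =ᶠ[nhds x] -((fun y => 1 - deriv (laplace η) y) * (f * f)) := by
        filter_upwards [Ioi_mem_nhds hx] with y hy
        exact hderiv y hy
      have hfx := hsmooth n x hx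
      have hL' : ContDiffAt ℝ n (fun y => 1 - deriv (laplace η) y) x := by
        refine contDiffAt_const.sub ?_
        exact ContDiffAt.derivWithin (contDiffAt_laplace hconc hx (n + 1)) le_rfl
      rw [iteratedDeriv_succ', hev.iteratedDeriv_eq, iteratedDeriv_neg, pow_succ]
      have hff : ∀ k ≤ n, 0 ≤ (-1 : ℝ) ^ k * iteratedDeriv k (f * f) x := fun k hk =>
        alternating_mul (hsmooth k x hx) (hsmooth k x hx)
          (fun j hj => ih j (by omega) x hx) (fun j hj => ih j (by omega) x hx)
      have := alternating_mul (v := f * f) hL' (hfx.mul hfx)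
        (fun k _ => completely_monotone_one_sub hconc k hx) hff
      linarith
end

section
/- Let λ ∈ ℝ and let η be a finite non-negative Borel measure on (0,∞) with ∫_{(0,∞)} t² dη(t) < ∞, and define h(z) = z + λ − ∫_{(0,∞)} e^{−zt} dη(t) for Re z ≥ 0; assume h(z) ≠ 0 for every z ∈ ℂ with Re z ≥ 0. If g : [0,∞) → ℝ is Lebesgue integrable and satisfies ∫₀^∞ e^{−iyt} g(t) dt = 1/h(iy) for every y ∈ ℝ, then g(t) ≥ 0 for Lebesgue-almost every t ∈ [0,∞). -/
open MeasureTheory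

/-!
Evaluating `h` along the real axis and letting `x → ∞` shows `h 0 > 0`, because `h` has no real
zero on `[0,∞)`; that is, the total mass of `η` is strictly smaller than `λ`
(`mass_lt_of_ne_zero`).

Let `E` be the measure with density `e^{-λt}` on `(0,∞)`; its total mass is `1/λ`, and its Fourier
transform is `1/(λ + iy)`. Write `P` and `N` for the measures with densities `g⁺` and `g⁻`. The
identity `ĝ · h = 1` rearranges to `ĝ = Ê + Ê η̂ ĝ`, so by injectivity of the Fourier transform on
finite measures, with `μ = E ∗ η`,
`P + μ ∗ N = E + μ ∗ P + N`.
Evaluated on `{g < 0}`, a null set of `P` that carries `N`, this gives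
`N(ℝ) ≤ (μ ∗ N)(ℝ) = μ(ℝ) N(ℝ)` (`eq_zero_of_add_conv_eq`). Since `μ(ℝ) = η(ℝ)/λ < 1`, `N = 0`.
-/

lemma charFun_add {μ ν : Measure ℝ} [IsFiniteMeasure μ] [IsFiniteMeasure ν] (t : ℝ) :
    charFun (μ + ν) t = charFun μ t + charFun ν t := by
  have key : ∀ (ρ : Measure ℝ) [IsFiniteMeasure ρ],
      Integrable (fun x : ℝ => Complex.exp (t * x * Complex.I)) ρ := by
    intro ρ _
    refine Integrable.of_bound (C := 1) (by fun_prop) (ae_of_all _ fun x => ?_)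
    have := Complex.norm_exp_ofReal_mul_I (t * x)
    push_cast at this
    exact this.le
  simp only [charFun_apply_real]
  exact integral_add_measure (key μ) (key ν)

lemma charFun_withDensity_ofReal {ν : Measure ℝ} {f : ℝ → ℝ} (hf : Measurable f) (t : ℝ) :
    charFun (ν.withDensity fun x => ENNReal.ofReal (f x)) t
      = ∫ x, Complex.exp (t * x * Complex.I) * ((max (f x) 0 : ℝ) : ℂ) ∂ν := by
  rw [charFun_apply_real, integral_withDensity_eq_integral_toReal_smul (by fun_prop)
    (ae_of_all _ fun x => ENNReal.ofReal_lt_top)]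
  refine integral_congr_ae (ae_of_all _ fun x => ?_)
  simp only [ENNReal.toReal_ofReal', Complex.real_smul]
  ring

/-- The absence of zeros of `h` on `[0,∞)` forces `η(ℝ) < λ`, by the intermediate value theorem. -/
lemma mass_lt_of_ne_zero (lam : ℝ) (η : Measure ℝ) [IsFiniteMeasure η]
    (hpos : ∀ᵐ t ∂η, 0 < t)
    (hne : ∀ x : ℝ, 0 ≤ x → x + lam - ∫ t, Real.exp (-(x * t)) ∂η ≠ 0) :
    η.real Set.univ < lam := by
  set H : ℝ → ℝ := fun x => x + lam - ∫ t, Real.exp (-(x * t)) ∂η with hH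
  have hbd : ∀ x ∈ Set.Ici (0 : ℝ), ∀ᵐ t ∂η, ‖Real.exp (-(x * t))‖ ≤ 1 := by
    intro x hx
    filter_upwards [hpos] with t ht
    rw [Real.norm_eq_abs, Real.abs_exp, Real.exp_le_one_iff]
    have : 0 ≤ x * t := mul_nonneg hx ht.le
    linarith
  have hcont : ContinuousOn H (Set.Ici 0) := by
    refine ContinuousOn.sub (by fun_prop) ?_
    refine continuousOn_of_dominated (bound := fun _ => 1) (fun x _ => by fun_prop) hbd
      (integrable_const _) (ae_of_all _ fun t => by fun_prop)
  have hH0 : H 0 = lam - η.real Set.univ := by simp [hH]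
  by_contra hcon
  have hle : H 0 ≤ 0 := by rw [hH0]; linarith
  set X : ℝ := η.real Set.univ + |lam| with hX
  have hX0 : 0 ≤ X := by positivity
  have hHX : 0 ≤ H X := by
    have h1 : ∫ t, Real.exp (-(X * t)) ∂η ≤ 1 * η.real Set.univ :=
      (le_abs_self _).trans (norm_integral_le_of_norm_le_const (hbd X hX0))
    have h2 := neg_abs_le lam
    simp only [hH]
    linarith
  obtain ⟨x, hx, hx0⟩ := intermediate_value_Icc hX0
    (hcont.mono Set.Icc_subset_Ici_self) (Set.mem_Icc.2 ⟨hle, hHX⟩)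
  exact hne x hx.1 hx0

lemma conv_univ (μ ν : Measure ℝ) [IsFiniteMeasure μ] [IsFiniteMeasure ν] :
    (μ.conv ν) Set.univ = μ Set.univ * ν Set.univ := by
  rw [Measure.conv, Measure.map_apply (by fun_prop) MeasurableSet.univ, Set.preimage_univ,
    Measure.prod_apply MeasurableSet.univ]
  simp [mul_comm]

/-- A signed solution `P - N` of the renewal equation `P - N = E + μ ∗ (P - N)` with `E ≥ 0`,
`μ ≥ 0` and `μ(ℝ) < 1` is nonnegative; here `P` and `N` are its positive and negative parts,
separated by the set `A`. -/
lemma eq_zero_of_add_conv_eq {P N E μ : Measure ℝ} [IsFiniteMeasure P] [IsFiniteMeasure N]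
    [IsFiniteMeasure E] [IsFiniteMeasure μ] {A : Set ℝ}
    (hPA : P A = 0) (hNA : N Aᶜ = 0) (hμ : μ Set.univ < 1)
    (heq : P + (μ.conv N) = E + (μ.conv P) + N) : N = 0 := by
  have hA : N Set.univ ≤ N A := by
    rw [← Set.union_compl_self A]
    exact (measure_union_le _ _).trans (by rw [hNA, add_zero])
  have h1 : N A ≤ (μ.conv N) A := by
    have h2 := congrArg (fun ρ : Measure ℝ => ρ A) heq
    simp only [Measure.add_apply, hPA, zero_add] at h2
    rw [h2]
    exact le_add_self
  have h4 : N Set.univ ≤ μ Set.univ * N Set.univ :=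
    hA.trans (h1.trans ((measure_mono (Set.subset_univ _)).trans (conv_univ μ N).le))
  by_contra hN
  have hN0 : N Set.univ ≠ 0 := by rwa [Ne, Measure.measure_univ_eq_zero]
  have h5 : μ Set.univ * N Set.univ < 1 * N Set.univ :=
    ENNReal.mul_lt_mul_left hN0 (measure_ne_top _ _) hμ
  rw [one_mul] at h5
  exact absurd h4 (not_le.2 h5)

lemma integrable_exp_mul {ν : Measure ℝ} {f : ℝ → ℝ} (hf : Integrable f ν) (t : ℝ) :
    Integrable (fun x : ℝ => Complex.exp (t * x * Complex.I) * (f x : ℂ)) ν := by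
  refine hf.ofReal.bdd_mul (c := 1) (by fun_prop) (ae_of_all _ fun x => ?_)
  have := Complex.norm_exp_ofReal_mul_I (t * x)
  push_cast at this
  exact this.le

/-- The measure with density `e^{-λt}` on `(0,∞)`. -/
noncomputable def expKernel (lam : ℝ) : Measure ℝ :=
  (volume.restrict (Set.Ioi 0)).withDensity fun x => ENNReal.ofReal (Real.exp (-lam * x))

lemma charFun_expKernel {lam : ℝ} (hlam : 0 < lam) (t : ℝ) :
    charFun (expKernel lam) t = 1 / (lam - t * Complex.I) := by
  rw [expKernel, charFun_withDensity_ofReal (by fun_prop)]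
  have h1 : ∀ x : ℝ, Complex.exp (t * x * Complex.I) * ((max (Real.exp (-lam * x)) 0 : ℝ) : ℂ)
      = Complex.exp ((-lam + t * Complex.I) * x) := by
    intro x
    rw [max_eq_left (Real.exp_pos _).le, Complex.ofReal_exp, ← Complex.exp_add]
    congr 1
    push_cast
    ring
  simp only [h1]
  rw [integral_exp_mul_complex_Ioi (by simpa using hlam)]
  have h2 : (-lam + t * Complex.I : ℂ) = -(lam - t * Complex.I) := by ring
  rw [h2, Complex.ofReal_zero, mul_zero, Complex.exp_zero, neg_div_neg_eq]

lemma isFiniteMeasure_expKernel {lam : ℝ} (hlam : 0 < lam) : IsFiniteMeasure (expKernel lam) :=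
  isFiniteMeasure_withDensity_ofReal
    (integrableOn_exp_mul_Ioi (neg_lt_zero.2 hlam) 0).2

lemma expKernel_univ {lam : ℝ} (hlam : 0 < lam) :
    (expKernel lam).real Set.univ = 1 / lam := by
  have := charFun_expKernel hlam 0
  rw [charFun_zero] at this
  simp only [Complex.ofReal_zero, zero_mul, sub_zero] at this
  exact_mod_cast this

/-- If `h(z) = z + λ − ∫_{(0,∞)} e^{−zt} dη(t)` has no zero on `{Re z ≥ 0}` and `g` is an
integrable kernel on `[0,∞)` with Fourier transform `1/h(iy)`, then `g ≥ 0` a.e. on `[0,∞)`. -/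
theorem stmt1
    (lam : ℝ) (η : Measure ℝ) [IsFiniteMeasure η]
    (hconc : η (Set.Ioi (0 : ℝ))ᶜ = 0)
    (hmom : Integrable (fun t : ℝ => t ^ 2) η)
    (h : ℂ → ℂ)
    (hdef : ∀ z : ℂ, h z = z + (lam : ℂ) - ∫ t : ℝ, Complex.exp (-(z * (t : ℂ))) ∂η)
    (hne : ∀ z : ℂ, 0 ≤ z.re → h z ≠ 0)
    (g : ℝ → ℝ)
    (hgint : IntegrableOn g (Set.Ici 0))
    (hgfourier : ∀ y : ℝ,
      ∫ t in Set.Ici (0 : ℝ), Complex.exp (-(Complex.I * (y : ℂ) * (t : ℂ))) * (g t : ℂ)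
        = 1 / h (Complex.I * (y : ℂ))) :
    ∀ᵐ t ∂(volume.restrict (Set.Ici (0 : ℝ))), 0 ≤ g t := by
  have hpos : ∀ᵐ t ∂η, 0 < t := by
    rw [ae_iff]; simpa [Set.compl_def] using hconc
  have hmass : η.real Set.univ < lam := by
    refine mass_lt_of_ne_zero lam η hpos fun x hx h0 => hne x (by simpa using hx) ?_
    rw [hdef]
    have h1 : ∫ t : ℝ, Complex.exp (-((x : ℂ) * t)) ∂η
        = ((∫ t, Real.exp (-(x * t)) ∂η : ℝ) : ℂ) := by
      rw [← integral_complex_ofReal]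
      push_cast
      rfl
    rw [h1]
    exact_mod_cast h0
  have hlam : 0 < lam := measureReal_nonneg.trans_lt hmass
  set ν : Measure ℝ := volume.restrict (Set.Ici (0 : ℝ)) with hν
  have hgi : Integrable g ν := hgint
  -- A Borel representative of `g` makes `{g < 0}` a Borel set.
  obtain ⟨f, hfm, hgf⟩ : ∃ f : ℝ → ℝ, Measurable f ∧ g =ᵐ[ν] f :=
    ⟨hgi.1.mk g, hgi.1.stronglyMeasurable_mk.measurable, hgi.1.ae_eq_mk⟩
  have hfi : Integrable f ν := hgi.congr hgf
  set P := ν.withDensity fun x => ENNReal.ofReal (f x) with hP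
  set N := ν.withDensity fun x => ENNReal.ofReal (-f x) with hN
  have : IsFiniteMeasure P := isFiniteMeasure_withDensity_ofReal hfi.2
  have : IsFiniteMeasure N := isFiniteMeasure_withDensity_ofReal hfi.neg.2
  have := isFiniteMeasure_expKernel hlam
  have hPN : ∀ t : ℝ, charFun P t - charFun N t = 1 / (lam - t * Complex.I - charFun η t) := by
    intro t
    rw [hP, hN, charFun_withDensity_ofReal hfm, charFun_withDensity_ofReal (f := fun x => -f x) hfm.neg,
      ← integral_sub (integrable_exp_mul hfi.pos_part t) (integrable_exp_mul hfi.neg_part t)]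
    -- `charFun` uses the kernel `e^{itx}`, so it corresponds to the frequency `y = -t`.
    have h1 := hgfourier (-t)
    have h2 : h (Complex.I * ((-t : ℝ) : ℂ)) = lam - t * Complex.I - charFun η t := by
      rw [hdef, charFun_apply_real]
      have h3 : ∀ x : ℝ, -(Complex.I * ((-t : ℝ) : ℂ) * x) = t * x * Complex.I := by
        intro x; push_cast; ring
      simp only [h3]
      push_cast
      ring
    rw [← h2, ← h1]
    refine integral_congr_ae ?_
    filter_upwards [hgf] with x hx
    rw [hx, ← mul_sub, ← Complex.ofReal_sub]
    have h4 : max (f x) 0 - max (-f x) 0 = f x := by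
      rcases le_total 0 (f x) with h | h
      · rw [max_eq_left h, max_eq_right (by linarith)]; ring
      · rw [max_eq_right h, max_eq_left (by linarith)]; ring
    rw [h4]
    congr 2
    push_cast
    ring
  have hne' : ∀ t : ℝ, (lam - t * Complex.I - charFun η t : ℂ) ≠ 0 := by
    intro t h0
    have h1 := norm_charFun_le (μ := η) t
    have h2 : (charFun η t) = lam - t * Complex.I := by linear_combination -h0
    have h3 := Complex.re_le_norm (charFun η t)
    rw [h2] at h3 h1
    simp at h3 h1
    linarith
  have heq : P + ((expKernel lam).conv η).conv N
      = expKernel lam + ((expKernel lam).conv η).conv P + N := by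
    refine Measure.ext_of_charFun (funext fun t => ?_)
    simp only [charFun_add, charFun_conv, charFun_expKernel hlam]
    have h1 := hPN t
    have h2 := hne' t
    have h3 : (lam - t * Complex.I : ℂ) ≠ 0 := by
      intro h0
      have := congrArg Complex.re h0
      simp at this
      linarith
    rw [eq_div_iff h2] at h1
    field_simp
    linear_combination h1
  have hμ : ((expKernel lam).conv η) Set.univ < 1 := by
    have h4 : (expKernel lam Set.univ * η Set.univ).toReal < 1 := by
      rw [ENNReal.toReal_mul]
      change (expKernel lam).real Set.univ * η.real Set.univ < 1
      rw [expKernel_univ hlam, one_div, inv_mul_lt_iff₀ hlam]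
      linarith
    rw [conv_univ]
    exact (ENNReal.toReal_lt_toReal (by finiteness) (by finiteness)).1 (by simpa using h4)
  have hmeas : MeasurableSet {x | f x < 0} := measurableSet_lt hfm measurable_const
  have hN0 : N = 0 := by
    refine eq_zero_of_add_conv_eq (A := {x | f x < 0}) ?_ ?_ hμ heq
    · rw [hP, withDensity_apply _ hmeas]
      exact setLIntegral_eq_zero hmeas fun x hx => ENNReal.ofReal_of_nonpos (le_of_lt hx)
    · rw [hN, withDensity_apply _ hmeas.compl]
      refine setLIntegral_eq_zero hmeas.compl fun x hx => ENNReal.ofReal_of_nonpos ?_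
      have : ¬ f x < 0 := hx
      linarith
  rw [hN, withDensity_eq_zero_iff (by fun_prop)] at hN0
  filter_upwards [hgf, hN0] with x hx hx0
  rw [hx]
  have := ENNReal.ofReal_eq_zero.1 hx0
  linarith
end

section
/- Let λ, ξ ∈ ℝ and τ ∈ (0,∞) with |ξ| ≤ 1/τ. Then z + λ − ξ e^{−τz} ≠ 0 for every z ∈ ℂ with Re z ≥ 0 if and only if ξ < λ. -/
/-!
If `λ ≤ ξ`, the restriction `x ↦ x + λ − ξ e^{−τx}` to the real axis is `≤ 0` at `0` and `≥ 0` at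
`|λ| + |ξ|`, so it vanishes in between.

Conversely let `ξ < λ` and let `z = x + iy` be a zero with `x ≥ 0`. The imaginary part gives
`|y| ≤ |ξ| |sin (τy)|`, and `|sin t| < |t|` for `t ≠ 0` together with `|ξ| τ ≤ 1` forces `y = 0`.
The real part then reads `(λ − ξ) + x + ξ (1 − e^{−τx}) = 0`, which is impossible because
`|ξ| (1 − e^{−τx}) ≤ |ξ| τ x ≤ x`.
-/

/-- For `λ, ξ ∈ ℝ` and `τ > 0` with `|ξ| ≤ 1/τ`, the function `z ↦ z + λ − ξ e^{−τz}` has no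
zero in the closed right half-plane if and only if `ξ < λ`. -/
theorem stmt3 (lam ξ τ : ℝ) (hτ : 0 < τ) (hξ : |ξ| ≤ 1 / τ) :
    (∀ z : ℂ, 0 ≤ z.re → z + (lam : ℂ) - (ξ : ℂ) * Complex.exp (-((τ : ℂ) * z)) ≠ 0) ↔
      ξ < lam := by
  have hξτ : |ξ| * τ ≤ 1 := by rwa [le_div_iff₀ hτ] at hξ
  constructor
  · intro h
    by_contra! hle
    have hb : 0 ≤ |lam| + |ξ| := by positivity
    have hcont : ContinuousOn (fun x : ℝ => x + lam - ξ * Real.exp (-(τ * x)))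
        (Set.Icc 0 (|lam| + |ξ|)) := by fun_prop
    have hmem : (0 : ℝ) ∈ Set.Icc ((0 : ℝ) + lam - ξ * Real.exp (-(τ * 0)))
        (|lam| + |ξ| + lam - ξ * Real.exp (-(τ * (|lam| + |ξ|)))) := by
      constructor
      · simpa using hle
      · have h1 : Real.exp (-(τ * (|lam| + |ξ|))) ≤ 1 :=
          Real.exp_le_one_iff.mpr (by have := mul_nonneg hτ.le hb; linarith)
        have h2 := mul_le_mul_of_nonneg_left h1 (abs_nonneg ξ)
        have h3 := mul_le_mul_of_nonneg_right (le_abs_self ξ)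
          (Real.exp_nonneg (-(τ * (|lam| + |ξ|))))
        linarith [neg_abs_le lam]
    obtain ⟨x, hx, hfx⟩ := intermediate_value_Icc hb hcont hmem
    refine h (x : ℂ) (by simpa using hx.1) ?_
    exact_mod_cast congrArg (fun r : ℝ => (r : ℂ)) hfx
  · intro hlt z hz h0
    have hre := congrArg Complex.re h0
    have him := congrArg Complex.im h0
    simp [Complex.exp_re, Complex.exp_im] at hre him
    have he1 : Real.exp (-(τ * z.re)) ≤ 1 :=
      Real.exp_le_one_iff.mpr (by have := mul_nonneg hτ.le hz; linarith)
    have hy : z.im = 0 := by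
      by_contra hy
      have hsin : |Real.sin (τ * z.im)| < |τ * z.im| :=
        Real.abs_sin_lt_abs (mul_ne_zero hτ.ne' hy)
      have h1 : |z.im| = |ξ| * (Real.exp (-(τ * z.re)) * |Real.sin (τ * z.im)|) := by
        have := congrArg abs (eq_neg_of_add_eq_zero_left him)
        rwa [abs_neg, abs_mul, abs_mul, Real.abs_exp] at this
      have h2 : |z.im| ≤ |ξ| * |Real.sin (τ * z.im)| := by
        rw [h1]
        exact mul_le_mul_of_nonneg_left
          (mul_le_of_le_one_left (abs_nonneg _) he1) (abs_nonneg _)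
      rw [abs_mul, abs_of_pos hτ] at hsin
      have hypos : 0 < |z.im| := abs_pos.mpr hy
      have hξpos : 0 < |ξ| := by
        by_contra! hc
        have := mul_nonpos_of_nonpos_of_nonneg hc (abs_nonneg (Real.sin (τ * z.im)))
        linarith
      have h3 := mul_lt_mul_of_pos_left hsin hξpos
      have h4 := mul_le_mul_of_nonneg_right hξτ hypos.le
      linarith
    rw [hy] at hre
    simp at hre
    have h1 : 1 - Real.exp (-(τ * z.re)) ≤ τ * z.re := by
      linarith [Real.add_one_le_exp (-(τ * z.re))]
    have h2 := mul_le_mul_of_nonneg_left h1 (abs_nonneg ξ)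
    have h3 := mul_le_mul_of_nonneg_right hξτ hz
    have h4 := mul_le_mul_of_nonneg_right (neg_abs_le ξ) (sub_nonneg.mpr he1)
    linarith
end

section
/- Let p ≥ 2 and let P and Q be monic real polynomials with deg P = p and deg Q = p − 1, such that every complex root of P and every complex root of Q has strictly negative real part. Set λ := (coefficient of X^{p−1} in P) − (coefficient of X^{p−2} in Q) and R := (X + λ)·Q − P, so that deg R ≤ p − 2. If the function x ↦ R(x)/Q(x) is completely monotone on (0,∞), then the function x ↦ Q(x)/P(x) is completely monotone on (0,∞). -/
/-!
Write `r = R/Q` and `f = Q/P`. Since `P = (X + λ)Q - R`, on `(0,∞)` one has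
`f = 1 / (x + λ - r)`, hence `f' = -(1 - r') f²`. As `r` is completely monotone, so is `1 - r'`.
The Leibniz rule writes `(-1)ⁿ⁺¹ f⁽ⁿ⁺¹⁾` as a sum, with non-negative coefficients, of products of
signed derivatives of `1 - r'` and `f` of order at most `n`, so strong induction on `n` gives the
claim; the base case `f ≥ 0` is the positivity of `P` and `Q` on `(0,∞)`.
-/

/-- A function is completely monotone on `(0,∞)` if it is infinitely differentiable there and
`(−1)ⁿ f⁽ⁿ⁾(x) ≥ 0` for all `x > 0` and `n ≥ 0`. -/
def CompletelyMonotoneOn (f : ℝ → ℝ) : Prop :=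
  ContDiffOn ℝ (⊤ : ℕ∞) f (Set.Ioi 0) ∧
    ∀ (n : ℕ) (x : ℝ), 0 < x → 0 ≤ (-1 : ℝ) ^ n * iteratedDeriv n f x

/-- A non-constant monic polynomial tends to `∞`, so a non-positive value at `x ≥ 0` would force
a real root in `[x,∞)`. -/
lemma eval_pos_of_monic (P : Polynomial ℝ) (hPm : P.Monic) (hdeg : P.natDegree ≠ 0)
    (hroots : ∀ z : ℂ, Polynomial.aeval z P = 0 → z.re < 0) (x : ℝ) (hx : 0 ≤ x) :
    0 < P.eval x := by
  by_contra! hneg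
  have htop : Filter.Tendsto (fun y => P.eval y) Filter.atTop Filter.atTop := by
    refine P.tendsto_atTop_of_leadingCoeff_nonneg ?_ ?_
    · exact Polynomial.natDegree_pos_iff_degree_pos.mp (Nat.pos_of_ne_zero hdeg)
    · rw [hPm.leadingCoeff]; exact zero_le_one
  obtain ⟨y, hy0, hxy⟩ :=
    ((htop.eventually_ge_atTop 0).and (Filter.eventually_ge_atTop x)).exists
  obtain ⟨c, hc, hc0⟩ := intermediate_value_Icc hxy P.continuous.continuousOn ⟨hneg, hy0⟩
  have h := hroots (c : ℂ) (by
    have := Polynomial.aeval_algebraMap_apply ℂ c P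
    simp only [Complex.coe_algebraMap] at this
    rw [this, Polynomial.coe_aeval_eq_eval, show P.eval c = 0 from hc0, Complex.ofReal_zero])
  rw [Complex.ofReal_re] at h
  linarith [hc.1]

/-- Sign rule for the derivatives of a product, at a single point and up to a fixed order. -/
lemma signed_iteratedDeriv_mul_nonneg {u v : ℝ → ℝ} {x : ℝ} {n : ℕ}
    (hu : ContDiffAt ℝ (⊤ : ℕ∞) u x) (hv : ContDiffAt ℝ (⊤ : ℕ∞) v x)
    (hu' : ∀ k ≤ n, 0 ≤ (-1 : ℝ) ^ k * iteratedDeriv k u x)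
    (hv' : ∀ k ≤ n, 0 ≤ (-1 : ℝ) ^ k * iteratedDeriv k v x) :
    ∀ k ≤ n, 0 ≤ (-1 : ℝ) ^ k * iteratedDeriv k (u * v) x := by
  intro k hk
  have hk' : (k : WithTop ℕ∞) ≤ ((⊤ : ℕ∞) : WithTop ℕ∞) := by exact_mod_cast le_top
  rw [iteratedDeriv_mul (hu.of_le hk') (hv.of_le hk'), Finset.mul_sum]
  refine Finset.sum_nonneg fun i hi => ?_
  have hik : i ≤ k := Nat.lt_succ_iff.mp (Finset.mem_range.mp hi)
  have hsplit : (-1 : ℝ) ^ k = (-1) ^ i * (-1) ^ (k - i) := by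
    rw [← pow_add, Nat.add_sub_cancel' hik]
  have h := mul_nonneg (Nat.cast_nonneg (α := ℝ) (k.choose i))
    (mul_nonneg (hu' i (hik.trans hk)) (hv' (k - i) ((Nat.sub_le k i).trans hk)))
  rw [hsplit]
  linarith

/-- For monic real polynomials `P`, `Q` of degrees `p` and `p−1` whose roots all have negative
real part, with `λ = P.coeff (p−1) − Q.coeff (p−2)` and `R = (X+λ)Q − P`: if `R/Q` is
completely monotone on `(0,∞)`, then so is `Q/P`. -/
theorem stmt5 (p : ℕ) (hp : 2 ≤ p) (P Q : Polynomial ℝ)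
    (hPm : P.Monic) (hQm : Q.Monic)
    (hPdeg : P.natDegree = p) (hQdeg : Q.natDegree = p - 1)
    (hProots : ∀ z : ℂ, Polynomial.aeval z P = 0 → z.re < 0)
    (hQroots : ∀ z : ℂ, Polynomial.aeval z Q = 0 → z.re < 0)
    (lam : ℝ) (hlam : lam = P.coeff (p - 1) - Q.coeff (p - 2))
    (R : Polynomial ℝ) (hR : R = (Polynomial.X + Polynomial.C lam) * Q - P)
    (hcm : CompletelyMonotoneOn (fun x => R.eval x / Q.eval x)) :
    CompletelyMonotoneOn (fun x => Q.eval x / P.eval x) := by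
  have hPpos := eval_pos_of_monic P hPm (by omega) hProots
  have hQpos := eval_pos_of_monic Q hQm (by omega) hQroots
  set r : ℝ → ℝ := fun x => R.eval x / Q.eval x with hr
  set f : ℝ → ℝ := fun x => Q.eval x / P.eval x with hf
  have hsr : ∀ x : ℝ, 0 < x → ContDiffAt ℝ (⊤ : ℕ∞) r x := fun x hx =>
    hcm.1.contDiffAt (Ioi_mem_nhds hx)
  have hsf : ∀ x : ℝ, 0 < x → ContDiffAt ℝ (⊤ : ℕ∞) f x := fun x hx =>
    Q.contDiff_aeval _ |>.contDiffAt.div (P.contDiff_aeval _).contDiffAt (hPpos x hx.le).ne'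
  have hfeq : ∀ x : ℝ, 0 < x → f x = (x + lam - r x)⁻¹ := by
    intro x hx
    have hQ := (hQpos x hx.le).ne'
    have hden : x + lam - r x = P.eval x / Q.eval x := by
      simp only [hr, hR, Polynomial.eval_sub, Polynomial.eval_mul, Polynomial.eval_add,
        Polynomial.eval_X, Polynomial.eval_C]
      field_simp
      ring
    rw [hden, inv_div]
  have hdf : ∀ x : ℝ, 0 < x → deriv f x = -((fun y => 1 - deriv r y) * (f * f)) x := by
    intro x hx
    have hne : x + lam - r x ≠ 0 := by
      intro h0
      have h1 : 0 < f x := div_pos (hQpos x hx.le) (hPpos x hx.le)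
      rw [hfeq x hx, h0, inv_zero] at h1
      exact lt_irrefl _ h1
    have hrd : HasDerivAt r (deriv r x) x :=
      ((hsr x hx).differentiableAt (by simp)).hasDerivAt
    have hd := (((hasDerivAt_id x).add_const lam).sub hrd).inv hne
    have heq : f =ᶠ[nhds x] fun y => (y + lam - r y)⁻¹ := by
      filter_upwards [Ioi_mem_nhds hx] with y hy using hfeq y hy
    rw [heq.deriv_eq]
    refine hd.deriv.trans ?_
    simp only [Pi.mul_apply, hfeq x hx, id, Pi.sub_apply]
    field_simp
  have hg : ∀ (k : ℕ) (x : ℝ), 0 < x →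
      0 ≤ (-1 : ℝ) ^ k * iteratedDeriv k (fun y => 1 - deriv r y) x := by
    intro k x hx
    have h := hcm.2 (k + 1) x hx
    rw [iteratedDeriv_succ', pow_succ] at h
    rcases k with _ | k
    · simp only [iteratedDeriv_zero] at h ⊢
      linarith
    · rw [iteratedDeriv_const_sub (Nat.succ_pos k), iteratedDeriv_neg]
      linarith
  have hsg : ∀ x : ℝ, 0 < x → ContDiffAt ℝ (⊤ : ℕ∞) (fun y => 1 - deriv r y) x := by
    intro x hx
    refine contDiffAt_const.sub ?_
    exact ((hcm.1.deriv_of_isOpen (m := ((⊤ : ℕ∞) : WithTop ℕ∞)) isOpen_Ioi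
      (by simp)).contDiffAt (Ioi_mem_nhds hx))
  refine ⟨fun x hx => (hsf x hx).contDiffWithinAt, fun n => ?_⟩
  induction n using Nat.strong_induction_on with
  | _ n ih =>
    intro x hx
    rcases n with _ | n
    · simpa using (div_pos (hQpos x hx.le) (hPpos x hx.le)).le
    · have hev : deriv f =ᶠ[nhds x] -((fun y => 1 - deriv r y) * (f * f)) := by
        filter_upwards [Ioi_mem_nhds hx] with y hy using hdf y hy
      have hfk : ∀ k ≤ n, 0 ≤ (-1 : ℝ) ^ k * iteratedDeriv k f x :=
        fun k hk => ih k (Nat.lt_succ_of_le hk) x hx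
      have hmul : 0 ≤ (-1 : ℝ) ^ n *
          iteratedDeriv n ((fun y => 1 - deriv r y) * (f * f)) x :=
        signed_iteratedDeriv_mul_nonneg (hsg x hx) ((hsf x hx).mul (hsf x hx))
        (fun k _ => hg k x hx)
        (signed_iteratedDeriv_mul_nonneg (hsf x hx) (hsf x hx) hfk hfk) n le_rfl
      rw [iteratedDeriv_succ', hev.iteratedDeriv_eq n, iteratedDeriv_neg, pow_succ]
      linarith
end

section
/- Let P be a real polynomial and let β₁, β₂ ∈ ℝ with β₂ < β₁ < 0. Define f(t) = (P(β₂) e^{β₂ t} − P(β₁) e^{β₁ t})/(β₁ − β₂) for t ≥ 0. Then f(t) ≥ 0 for all t ≥ 0 if and only if P(β₁) ≤ P(β₂) and P(β₁) ≤ 0. -/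
/-! Dividing by `e^{β₁ t} / (β₁ - β₂) > 0`, the inequality `0 ≤ f t` becomes
`P(β₁) ≤ P(β₂) e^{-(β₁ - β₂) t}`. As `t` runs over `[0, ∞)` the exponential decreases from `1`
towards `0`, so `t = 0` and `t → ∞` give the two necessary conditions; conversely, for
`x ∈ (0, 1]`, `P(β₂) x ≥ P(β₁) x ≥ P(β₁)` because `P(β₁) ≤ 0`. -/

/-- For a real polynomial `P` and `β₂ < β₁ < 0`, the function
`f(t) = (P(β₂) e^{β₂ t} − P(β₁) e^{β₁ t})/(β₁ − β₂)` is non-negative on `[0,∞)` if and only if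
`P(β₁) ≤ P(β₂)` and `P(β₁) ≤ 0`. -/
theorem stmt6 (P : Polynomial ℝ) (β₁ β₂ : ℝ) (h21 : β₂ < β₁) (h10 : β₁ < 0)
    (f : ℝ → ℝ)
    (hf : ∀ t : ℝ, f t =
      (P.eval β₂ * Real.exp (β₂ * t) - P.eval β₁ * Real.exp (β₁ * t)) / (β₁ - β₂)) :
    (∀ t : ℝ, 0 ≤ t → 0 ≤ f t) ↔ P.eval β₁ ≤ P.eval β₂ ∧ P.eval β₁ ≤ 0 := by
  have hd : 0 < β₁ - β₂ := sub_pos.mpr h21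
  have key : ∀ t : ℝ, 0 ≤ f t ↔
      P.eval β₁ ≤ P.eval β₂ * Real.exp (-((β₁ - β₂) * t)) := by
    intro t
    have hexp : Real.exp (β₂ * t) = Real.exp (-((β₁ - β₂) * t)) * Real.exp (β₁ * t) := by
      rw [← Real.exp_add]
      congr 1
      ring
    rw [hf, le_div_iff₀ hd, zero_mul, sub_nonneg, hexp, ← mul_assoc,
      mul_le_mul_iff_left₀ (Real.exp_pos _)]
  simp only [key]
  constructor
  · intro h
    refine ⟨by simpa using h 0 le_rfl, ?_⟩
    have hlim : Filter.Tendsto (fun t : ℝ => P.eval β₂ * Real.exp (-((β₁ - β₂) * t)))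
        Filter.atTop (nhds (P.eval β₂ * 0)) :=
      (Real.tendsto_exp_neg_atTop_nhds_zero.comp
        (Filter.tendsto_id.const_mul_atTop hd)).const_mul _
    rw [mul_zero] at hlim
    exact ge_of_tendsto hlim ((Filter.eventually_ge_atTop 0).mono h)
  · rintro ⟨hab, ha⟩ t ht
    have hx : Real.exp (-((β₁ - β₂) * t)) ≤ 1 :=
      Real.exp_le_one_iff.mpr (neg_nonpos.mpr (mul_nonneg hd.le ht))
    calc P.eval β₁ ≤ P.eval β₁ * Real.exp (-((β₁ - β₂) * t)) := by nlinarith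
      _ ≤ P.eval β₂ * Real.exp (-((β₁ - β₂) * t)) := by gcongr
end

section
/- Let α₁, α₂ ∈ ℝ with α₂ < α₁ < 0, and let P(x) = (x − α₁)(x − α₂)². If β ∈ ℝ satisfies (α₁ + α₂)/2 < β ≤ (α₁ + α₂)/2 + (α₁ − α₂)/6, then P(β) ≤ 0 and P′(β) ≤ 0. -/
open Polynomial

/-- For `α₂ < α₁ < 0` and `P(x) = (x − α₁)(x − α₂)²`, every `β` with
`(α₁+α₂)/2 < β ≤ (α₁+α₂)/2 + (α₁−α₂)/6` satisfies `P(β) ≤ 0` and `P′(β) ≤ 0`. -/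
theorem stmt9 (α₁ α₂ β : ℝ) (h21 : α₂ < α₁) (h10 : α₁ < 0)
    (P : Polynomial ℝ) (hP : P = (X - C α₁) * (X - C α₂) ^ 2)
    (hβ₁ : (α₁ + α₂) / 2 < β) (hβ₂ : β ≤ (α₁ + α₂) / 2 + (α₁ - α₂) / 6) :
    P.eval β ≤ 0 ∧ P.derivative.eval β ≤ 0 := by
  subst hP
  constructor
  · have h : β - α₁ ≤ 0 := by linarith
    simpa using mul_nonpos_of_nonpos_of_nonneg h (sq_nonneg (β - α₂))
  · -- `P′` vanishes exactly at the double root `α₂` and at `(2α₁ + α₂)/3`, the upper bound on `β`.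
    have key : (derivative ((X - C α₁) * (X - C α₂) ^ 2)).eval β
        = (β - α₂) * (3 * β - 2 * α₁ - α₂) := by
      simp [derivative_mul, derivative_pow]
      ring
    rw [key]
    exact mul_nonpos_of_nonneg_of_nonpos (by linarith) (by linarith)
end

section
/- Let d ≥ 1 and let φ = (φ_{jk}) be a d×d matrix of finite signed Borel measures on [0,∞). Let g : [0,∞) → ℝ^{d×d} be measurable with every entry Lebesgue integrable on [0,∞), extended by 0 to (−∞,0), and define the convolution (φ∗g)(u) as the matrix with (j,k)-entry Σ_{l=1}^d ∫_{[0,u]} g_{lk}(u − v) dφ_{jl}(v). Suppose g satisfies g(t) = I + ∫₀^t (φ∗g)(u) du for all t ≥ 0 (I the identity matrix). Then for all 0 ≤ s < t, g(t) = g(t−s)·g(s) + ∫_s^t g(t−u)·(φ∗(g·1_{[0,s]}))(u) du, where g·1_{[0,s]} denotes the function equal to g on [0,s] and 0 elsewhere. -/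
open MeasureTheory

/-!
The identity is the variation-of-constants formula for the shifted solution `y(r) = g(s + r)`.

Integrating the equation turns the measures `φ` into their bounded distribution functions
`ψ(x) = φ((-∞, x])`: by Fubini, `∫_{-∞}^x (φ∗h)(u) du = (ψ∗h)(x)` (`integral_sconv`), where `∗` on
the right is the convolution `cv` of functions on `ℝ`. All functions below vanish on `(-∞, 0)`. The
hypothesis reads `g = I + ψ∗g` on `[0, ∞)`, and splitting `g` at `s` gives
`y = g(s) + ∫₀^· f + ψ∗y`, where `f(r) = (φ∗(g·1_{[0,s]}))(s + r)` for `r ≥ 0`.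

By associativity of convolution, `z = g·g(s) + g∗f` satisfies the same equation as `y`
(`variation_of_constants`). The difference `w = y - z` is integrable and satisfies `w = ψ∗w`, hence
`|w(r)| ≤ K ∫₀^r |w|`, and iterating this bound gives `w = 0` (`volterra_unique`). Evaluating
`y = z` at `r = t - s` is the claim.
-/

/-! ### Convolution of functions on the line -/

/-- The convolution `(a∗b)(x) = ∫ a(x - u) b(u) du` over the whole line; for functions vanishing on
`(-∞, 0)` this is the integral over `[0, x]`. -/
noncomputable def cv (a b : ℝ → ℝ) (x : ℝ) : ℝ := ∫ u, a (x - u) * b u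

lemma cv_eq_convolution (a b : ℝ → ℝ) :
    cv a b = convolution a b (ContinuousLinearMap.mul ℝ ℝ) volume := by
  ext x
  exact convolution_mul_swap.symm

lemma integrable_cv_integrand {a b : ℝ → ℝ} {C : ℝ} (ha : Measurable a) (hC : ∀ x, |a x| ≤ C)
    (hb : Integrable b) (x : ℝ) : Integrable fun u => a (x - u) * b u :=
  hb.bdd_mul (ha.comp (measurable_const.sub measurable_id)).aestronglyMeasurable
    (Filter.Eventually.of_forall fun u => hC (x - u))

lemma integrable_cv {a b : ℝ → ℝ} (ha : Integrable a) (hb : Integrable b) :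
    Integrable (cv a b) := by
  rw [cv_eq_convolution]
  exact ha.integrable_convolution _ hb

/-- Boundedness of `a` makes both iterated integrals converge at every point, so the identity holds
everywhere and not just almost everywhere. -/
lemma cv_assoc {a b c : ℝ → ℝ} {C : ℝ} (ha : Measurable a) (hC : ∀ x, |a x| ≤ C)
    (hb : Integrable b) (hc : Integrable c) (x : ℝ) :
    cv (cv a b) c x = cv a (cv b c) x := by
  simp only [cv_eq_convolution]
  have hswap : ∀ {b' : ℝ → ℝ} {a' : ℝ → ℝ}, Measurable a' → (∀ x, |a' x| ≤ C) → Integrable b' →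
      ∀ y, ConvolutionExistsAt a' b' y (ContinuousLinearMap.mul ℝ ℝ) volume := by
    intro b' a' ha' hC' hb' y
    exact (hb'.comp_sub_left y).bdd_mul ha'.aestronglyMeasurable
      (Filter.Eventually.of_forall fun u => hC' u)
  refine convolution_assoc _ _ _ _ (fun x y z => mul_assoc x y z) ha.aestronglyMeasurable
    hb.aestronglyMeasurable hc.aestronglyMeasurable
    (Filter.Eventually.of_forall fun y => hswap ha hC hb y)
    (hb.norm.ae_convolution_exists _ hc.norm) ?_
  exact hswap ha.norm (fun x => by simpa using hC x) (hb.norm.integrable_convolution _ hc.norm) x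

lemma measurable_cv {a b : ℝ → ℝ} (ha : Measurable a) (hb : Measurable b) :
    Measurable (cv a b) := by
  have : StronglyMeasurable (Function.uncurry fun x u : ℝ => a (x - u) * b u) := by
    apply Measurable.stronglyMeasurable
    simp only [Function.uncurry_def]
    fun_prop
  exact this.integral_prod_right.measurable

lemma abs_cv_le {a b : ℝ → ℝ} {C : ℝ} (hC : ∀ x, |a x| ≤ C) (hb : Integrable b) (x : ℝ) :
    |cv a b x| ≤ C * ∫ u, |b u| := by
  rw [← integral_const_mul]
  change ‖∫ u, a (x - u) * b u‖ ≤ _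
  refine norm_integral_le_of_norm_le (hb.abs.const_mul C) (Filter.Eventually.of_forall fun u => ?_)
  simp only [norm_mul, Real.norm_eq_abs]
  exact mul_le_mul_of_nonneg_right (hC _) (abs_nonneg _)

lemma cv_eq_zero_of_neg {a b : ℝ → ℝ} (ha : ∀ x < 0, a x = 0) (hb : ∀ x < 0, b x = 0) {x : ℝ}
    (hx : x < 0) : cv a b x = 0 := by
  refine integral_eq_zero_of_ae (Filter.Eventually.of_forall fun u => ?_)
  rcases lt_or_ge u 0 with hu | hu
  · simp [hb u hu]
  · simp [ha (x - u) (by linarith)]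

/-! ### Convolution with a finite measure -/

lemma integrable_prod_shift (μ : Measure ℝ) [IsFiniteMeasure μ] {h : ℝ → ℝ}
    (hh : Integrable h) :
    Integrable (fun p : ℝ × ℝ => h (p.1 - p.2)) (volume.prod μ) := by
  simpa using (integrable_const (1 : ℝ) (μ := μ)).convolution_integrand
    (ContinuousLinearMap.mul ℝ ℝ) hh

lemma integrable_measure_conv (μ : Measure ℝ) [IsFiniteMeasure μ] {h : ℝ → ℝ}
    (hh : Integrable h) :
    Integrable fun u => ∫ v, h (u - v) ∂μ :=
  (integrable_prod_shift μ hh).integral_prod_left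

/-- Fubini: the primitive of `h∗μ` is the convolution of `h` with the distribution function
of `μ`. -/
lemma integral_measure_conv (μ : Measure ℝ) [IsFiniteMeasure μ] {h : ℝ → ℝ}
    (hh : Integrable h) (x : ℝ) :
    ∫ u in Set.Iic x, ∫ v, h (u - v) ∂μ = cv (fun r => μ.real (Set.Iic r)) h x := by
  have h1 : Integrable (fun p : ℝ × ℝ => (Set.Iic x).indicator (fun u => h (u - p.2)) p.1)
      (volume.prod μ) := by
    have := (integrable_prod_shift μ hh).indicator (s := Prod.fst ⁻¹' Set.Iic x)
      (measurable_fst measurableSet_Iic)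
    exact this
  have h2 : Integrable (fun p : ℝ × ℝ => (Set.Iic (x - p.1)).indicator (fun _ => h p.1) p.2)
      (volume.prod μ) := by
    have := (hh.mul_prod (integrable_const (1 : ℝ) (μ := μ))).indicator
      (s := {p : ℝ × ℝ | p.2 ≤ x - p.1}) (measurableSet_le (by fun_prop) (by fun_prop))
    refine this.congr (Filter.Eventually.of_forall fun p => ?_)
    simp [Set.indicator]
  calc ∫ u in Set.Iic x, ∫ v, h (u - v) ∂μ
      = ∫ u, ∫ v, (Set.Iic x).indicator (fun u => h (u - v)) u ∂μ := by
        rw [← integral_indicator measurableSet_Iic]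
        congr 1; ext u
        by_cases hu : u ∈ Set.Iic x <;> simp [hu]
    _ = ∫ v, (∫ u, (Set.Iic x).indicator (fun u => h (u - v)) u) ∂μ :=
        integral_integral_swap h1
    _ = ∫ v, (∫ u, (Set.Iic (x - u)).indicator (fun _ => h u) v) ∂μ := by
        congr 1; ext v
        rw [← integral_add_right_eq_self _ v]
        congr 1; ext u
        simp [Set.indicator, le_sub_iff_add_le, add_comm]
    _ = ∫ u, ∫ v, (Set.Iic (x - u)).indicator (fun _ => h u) v ∂μ :=
        (integral_integral_swap h2).symm
    _ = _ := by
        unfold cv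
        congr 1; ext u
        rw [integral_indicator measurableSet_Iic]
        simp

lemma setIntegral_Icc_eq_integral {μ : Measure ℝ} (hμ : μ (Set.Iio 0) = 0) {h : ℝ → ℝ}
    (h0 : ∀ x < 0, h x = 0) (u : ℝ) :
    ∫ v in Set.Icc 0 u, h (u - v) ∂μ = ∫ v, h (u - v) ∂μ := by
  rw [← integral_indicator measurableSet_Icc]
  refine integral_congr_ae ?_
  have : ∀ᵐ v ∂μ, v ∉ Set.Iio (0 : ℝ) := measure_eq_zero_iff_ae_notMem.1 hμ
  filter_upwards [this] with v hv
  by_cases hvu : v ≤ u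
  · rw [Set.indicator_of_mem (Set.mem_Icc.2 ⟨not_lt.1 hv, hvu⟩)]
  · rw [Set.indicator_of_notMem (fun h => hvu h.2), h0 _ (by linarith)]

/-- The distribution function `x ↦ (p - m)((-∞, x])` of the signed measure `p - m`. -/
noncomputable def cumul (p m : Measure ℝ) (x : ℝ) : ℝ := p.real (Set.Iic x) - m.real (Set.Iic x)

/-- The convolution of the signed measure `p - m` with `h`, the integral being taken over
`[0, u]`. -/
noncomputable def sconv (p m : Measure ℝ) (h : ℝ → ℝ) (u : ℝ) : ℝ :=
  (∫ v in Set.Icc 0 u, h (u - v) ∂p) - ∫ v in Set.Icc 0 u, h (u - v) ∂m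

lemma measurable_real_Iic (μ : Measure ℝ) [IsFiniteMeasure μ] :
    Measurable fun x => μ.real (Set.Iic x) :=
  Monotone.measurable fun _ _ hxy => measureReal_mono (Set.Iic_subset_Iic.2 hxy)

lemma measurable_cumul {p m : Measure ℝ} [IsFiniteMeasure p] [IsFiniteMeasure m] :
    Measurable (cumul p m) :=
  (measurable_real_Iic p).sub (measurable_real_Iic m)

lemma abs_cumul_le {p m : Measure ℝ} [IsFiniteMeasure p] [IsFiniteMeasure m] (x : ℝ) :
    |cumul p m x| ≤ p.real Set.univ + m.real Set.univ := by
  have h1 : p.real (Set.Iic x) ≤ p.real Set.univ := measureReal_mono (Set.subset_univ _)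
  have h2 : m.real (Set.Iic x) ≤ m.real Set.univ := measureReal_mono (Set.subset_univ _)
  have h3 : 0 ≤ p.real (Set.Iic x) := measureReal_nonneg
  have h4 : 0 ≤ m.real (Set.Iic x) := measureReal_nonneg
  rw [cumul, abs_le]
  constructor <;> linarith

lemma cumul_of_neg {p m : Measure ℝ} (hp : p (Set.Iio 0) = 0) (hm : m (Set.Iio 0) = 0) {x : ℝ}
    (hx : x < 0) : cumul p m x = 0 := by
  have hsub : Set.Iic x ⊆ Set.Iio 0 := fun u hu => lt_of_le_of_lt hu hx
  simp [cumul, measureReal_def, measure_mono_null hsub hp, measure_mono_null hsub hm]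

lemma sconv_of_neg {p m : Measure ℝ} (h : ℝ → ℝ) {u : ℝ} (hu : u < 0) : sconv p m h u = 0 := by
  simp [sconv, Set.Icc_eq_empty (not_le.2 hu)]

lemma integrable_sconv {p m : Measure ℝ} [IsFiniteMeasure p] [IsFiniteMeasure m]
    (hp : p (Set.Iio 0) = 0) (hm : m (Set.Iio 0) = 0) {h : ℝ → ℝ} (hh : Integrable h)
    (h0 : ∀ x < 0, h x = 0) :
    Integrable (sconv p m h) := by
  unfold sconv
  simp only [setIntegral_Icc_eq_integral hp h0, setIntegral_Icc_eq_integral hm h0]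
  exact (integrable_measure_conv p hh).sub (integrable_measure_conv m hh)

lemma integral_sconv {p m : Measure ℝ} [IsFiniteMeasure p] [IsFiniteMeasure m]
    (hp : p (Set.Iio 0) = 0) (hm : m (Set.Iio 0) = 0) {h : ℝ → ℝ} (hh : Integrable h)
    (h0 : ∀ x < 0, h x = 0) (x : ℝ) :
    ∫ u in Set.Iic x, sconv p m h u = cv (cumul p m) h x := by
  unfold sconv
  simp only [setIntegral_Icc_eq_integral hp h0, setIntegral_Icc_eq_integral hm h0]
  rw [integral_sub (integrable_measure_conv p hh).integrableOn
    (integrable_measure_conv m hh).integrableOn, integral_measure_conv p hh,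
    integral_measure_conv m hh]
  unfold cv
  rw [← integral_sub]
  · simp only [cumul, sub_mul]
  · exact integrable_cv_integrand (measurable_real_Iic p)
      (fun x => by
        rw [abs_of_nonneg measureReal_nonneg]; exact measureReal_mono (Set.subset_univ _)) hh x
  · exact integrable_cv_integrand (measurable_real_Iic m)
      (fun x => by
        rw [abs_of_nonneg measureReal_nonneg]; exact measureReal_mono (Set.subset_univ _)) hh x

/-! ### Uniqueness and variation of constants for Volterra equations -/

lemma setIntegral_Iic_of_neg_zero {n : ℝ → ℝ} (hn : Integrable n) (hneg : ∀ r < 0, n r = 0)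
    (r : ℝ) : ∫ u in Set.Iic r, n u = ∫ u in (0:ℝ)..r, n u := by
  rw [← intervalIntegral.integral_Iic_sub_Iic hn.integrableOn hn.integrableOn,
    integral_Iic_eq_integral_Iio (x := (0:ℝ)),
    setIntegral_eq_zero_of_forall_eq_zero (t := Set.Iio 0) (fun u hu => hneg u hu), sub_zero]

/-- A Grönwall inequality that needs no continuity: iterating the bound gives
`n(r) ≤ (C ∫ n) (C r)^k / k!` for every `k`. -/
lemma eq_zero_of_le_integral {n : ℝ → ℝ} {C : ℝ} (hC : 0 ≤ C) (hn : Integrable n)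
    (h0 : ∀ r, 0 ≤ n r) (hneg : ∀ r < 0, n r = 0)
    (hle : ∀ r, 0 ≤ r → n r ≤ C * ∫ u in Set.Iic r, n u) (r : ℝ) (hr : 0 ≤ r) : n r = 0 := by
  have key : ∀ k : ℕ, ∀ r, 0 ≤ r → n r ≤ (C * ∫ u, n u) * ((C * r) ^ k / k.factorial) := by
    intro k
    induction k with
    | zero =>
      intro r hr
      simp only [pow_zero, Nat.factorial_zero, Nat.cast_one, div_one, mul_one]
      exact (hle r hr).trans (mul_le_mul_of_nonneg_left
        (setIntegral_le_integral hn (Filter.Eventually.of_forall h0)) hC)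
    | succ k ih =>
      intro r hr
      refine (hle r hr).trans ?_
      rw [setIntegral_Iic_of_neg_zero hn hneg]
      have : ∫ u in (0:ℝ)..r, n u ≤
          ∫ u in (0:ℝ)..r, (C * ∫ u, n u) * ((C * u) ^ k / k.factorial) := by
        refine intervalIntegral.integral_mono_on hr hn.intervalIntegrable
          (Continuous.intervalIntegrable (by fun_prop) _ _) fun u hu => ih u hu.1
      refine (mul_le_mul_of_nonneg_left this hC).trans (le_of_eq ?_)
      simp only [mul_pow, intervalIntegral.integral_const_mul, intervalIntegral.integral_div,
        integral_pow, Nat.factorial_succ]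
      push_cast
      have := Nat.factorial_ne_zero k
      field_simp
      simp
      ring
  have hlim := (FloorSemiring.tendsto_pow_div_factorial_atTop (C * r)).const_mul (C * ∫ u, n u)
  rw [mul_zero] at hlim
  exact le_antisymm (ge_of_tendsto' hlim fun k => key k r hr) (h0 r)

/-- The homogeneous Volterra equation `w = ψ∗w` with bounded kernel has only the zero solution among
integrable functions. -/
lemma volterra_unique {d : ℕ} {ψ w : Fin d → Fin d → ℝ → ℝ} {C : ℝ}
    (hC0 : 0 ≤ C) (hC : ∀ j l x, |ψ j l x| ≤ C)
    (hψ0 : ∀ j l, ∀ x < 0, ψ j l x = 0)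
    (hw : ∀ j k, Integrable (w j k)) (hw0 : ∀ j k, ∀ x < 0, w j k x = 0)
    (heq : ∀ j k x, 0 ≤ x → w j k x = ∑ m, cv (ψ j m) (w m k) x) (j k : Fin d) (x : ℝ)
    (hx : 0 ≤ x) : w j k x = 0 := by
  have hb : ∀ j m k x, |cv (ψ j m) (w m k) x| ≤ C * ∫ u in Set.Iic x, |w m k u| := by
    intro j m k x
    rw [← integral_indicator measurableSet_Iic, ← integral_const_mul]
    change ‖∫ u, ψ j m (x - u) * w m k u‖ ≤ _
    refine norm_integral_le_of_norm_le
      (((hw m k).abs.indicator measurableSet_Iic).const_mul C)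
      (Filter.Eventually.of_forall fun u => ?_)
    by_cases hu : u ≤ x
    · simp only [Set.mem_Iic, hu, Set.indicator_of_mem, norm_mul, Real.norm_eq_abs]
      exact mul_le_mul_of_nonneg_right (hC j m _) (abs_nonneg _)
    · rw [hψ0 j m (x - u) (by linarith)]
      simp [hu]
  have hn : Integrable fun x => ∑ m, |w m k x| := integrable_finsetSum _ fun m _ => (hw m k).abs
  have hz := eq_zero_of_le_integral (n := fun x => ∑ m, |w m k x|) (C := d * C) (by positivity) hn
    (fun r => Finset.sum_nonneg fun _ _ => abs_nonneg _)
    (fun r hr => by simp [hw0 _ _ r hr]) ?_ x hx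
  · have := (Finset.sum_eq_zero_iff_of_nonneg (fun _ _ => abs_nonneg _)).1 hz j (Finset.mem_univ _)
    simpa using this
  · intro r hr
    rw [integral_finsetSum _ fun m _ => (hw m k).abs.integrableOn]
    calc ∑ j, |w j k r| ≤ ∑ _j : Fin d, ∑ m, C * ∫ u in Set.Iic r, |w m k u| := by
          refine Finset.sum_le_sum fun j _ => ?_
          rw [heq j k r hr]
          exact (Finset.abs_sum_le_sum_abs _ _).trans (Finset.sum_le_sum fun m _ => hb j m k r)
      _ = _ := by simp [Finset.mul_sum, mul_assoc]

/-- If `G = I + ψ∗G` and `y = c + ∫₀^· f + ψ∗y` on `[0, ∞)`, then `y = G·c + G∗f` there. -/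
lemma variation_of_constants {d : ℕ} {ψ G f y : Fin d → Fin d → ℝ → ℝ} {C : ℝ}
    (hψ : ∀ j l, Measurable (ψ j l)) (hC0 : 0 ≤ C) (hC : ∀ j l x, |ψ j l x| ≤ C)
    (hψ0 : ∀ j l, ∀ x < 0, ψ j l x = 0)
    (hGm : ∀ j k, Measurable (G j k)) (hG : ∀ j k, Integrable (G j k))
    (hG0 : ∀ j k, ∀ x < 0, G j k x = 0)
    (hGeq : ∀ j k x, 0 ≤ x →
      G j k x = (1 : Matrix (Fin d) (Fin d) ℝ) j k + ∑ m, cv (ψ j m) (G m k) x)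
    (hf : ∀ j k, Integrable (f j k)) (hf0 : ∀ j k, ∀ x < 0, f j k x = 0)
    (hy : ∀ j k, Integrable (y j k)) (hy0 : ∀ j k, ∀ x < 0, y j k x = 0)
    (c : Fin d → Fin d → ℝ)
    (hyeq : ∀ j k x, 0 ≤ x →
      y j k x = c j k + (∫ u in Set.Iic x, f j k u) + ∑ m, cv (ψ j m) (y m k) x)
    (j k : Fin d) (x : ℝ) (hx : 0 ≤ x) :
    y j k x = ∑ l, G j l x * c l k + ∑ l, cv (G j l) (f l k) x := by
  have hcvG : ∀ j l k, Integrable (cv (G j l) (f l k)) := fun j l k =>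
    integrable_cv (hG j l) (hf l k)
  have hzc : ∀ j k, Integrable fun x => ∑ l, G j l x * c l k := fun j k =>
    integrable_finsetSum _ fun l _ => (hG j l).mul_const _
  have hzf : ∀ j k, Integrable fun x => ∑ l, cv (G j l) (f l k) x := fun j k =>
    integrable_finsetSum _ fun l _ => hcvG j l k
  have hψi : ∀ j m x {b : ℝ → ℝ}, Integrable b → Integrable fun u => ψ j m (x - u) * b u :=
    fun j m x b hb => integrable_cv_integrand (hψ j m) (hC j m) hb x
  -- the equation for `G`, convolved with the forcing term `f`
  have hcvGf : ∀ j l k x, cv (G j l) (f l k) x =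
      (1 : Matrix (Fin d) (Fin d) ℝ) j l * (∫ u in Set.Iic x, f l k u) +
        ∑ m, cv (ψ j m) (cv (G m l) (f l k)) x := by
    intro j l k x
    have hi : ∀ m, Integrable fun u => cv (ψ j m) (G m l) (x - u) * f l k u := fun m =>
      integrable_cv_integrand (measurable_cv (hψ j m) (hGm m l)) (abs_cv_le (hC j m) (hG m l))
        (hf l k) x
    have h1 : ∀ u, G j l (x - u) * f l k u =
        (1 : Matrix (Fin d) (Fin d) ℝ) j l * (Set.Iic x).indicator (f l k) u +
          ∑ m, cv (ψ j m) (G m l) (x - u) * f l k u := by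
      intro u
      by_cases hu : u ≤ x
      · rw [hGeq j l (x - u) (by linarith), Set.indicator_of_mem (by simpa using hu),
          add_mul, Finset.sum_mul]
      · rw [hG0 j l (x - u) (by linarith), Set.indicator_of_notMem (by simpa using hu),
          Finset.sum_eq_zero fun m _ => by
            rw [cv_eq_zero_of_neg (hψ0 j m) (hG0 m l) (by linarith), zero_mul]]
        simp
    have h2 : cv (G j l) (f l k) x = _ := integral_congr_ae (Filter.Eventually.of_forall h1)
    rw [h2, integral_add (((hf l k).indicator measurableSet_Iic).const_mul _)
      (integrable_finsetSum _ fun m _ => hi m), integral_const_mul,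
      integral_indicator measurableSet_Iic, integral_finsetSum _ fun m _ => hi m]
    congr 1
    exact Finset.sum_congr rfl fun m _ => cv_assoc (hψ j m) (hC j m) (hG m l) (hf l k) x
  have hlin : ∀ j m k x, cv (ψ j m) (fun x => y m k x -
        (∑ l, G m l x * c l k + ∑ l, cv (G m l) (f l k) x)) x =
      cv (ψ j m) (y m k) x - (∑ l, cv (ψ j m) (G m l) x * c l k +
        ∑ l, cv (ψ j m) (cv (G m l) (f l k)) x) := by
    intro j m k x
    have h1 : ∀ u, ψ j m (x - u) * (y m k u -
        (∑ l, G m l u * c l k + ∑ l, cv (G m l) (f l k) u)) =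
        ψ j m (x - u) * y m k u - (∑ l, (ψ j m (x - u) * G m l u) * c l k +
          ∑ l, ψ j m (x - u) * cv (G m l) (f l k) u) := by
      intro u
      simp only [mul_sub, mul_add, Finset.mul_sum, mul_assoc]
    have i1 : ∀ l, Integrable fun u => (ψ j m (x - u) * G m l u) * c l k := fun l =>
      (hψi j m x (hG m l)).mul_const _
    have i2 : ∀ l, Integrable fun u => ψ j m (x - u) * cv (G m l) (f l k) u := fun l =>
      hψi j m x (hcvG m l k)
    have i3 : Integrable fun u => ∑ l, (ψ j m (x - u) * G m l u) * c l k +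
        ∑ l, ψ j m (x - u) * cv (G m l) (f l k) u :=
      (integrable_finsetSum _ fun l _ => i1 l).add (integrable_finsetSum _ fun l _ => i2 l)
    refine (integral_congr_ae (Filter.Eventually.of_forall h1)).trans ?_
    rw [integral_sub (hψi j m x (hy m k)) i3,
      integral_add (integrable_finsetSum _ fun l _ => i1 l)
        (integrable_finsetSum _ fun l _ => i2 l),
      integral_finsetSum _ fun l _ => i1 l, integral_finsetSum _ fun l _ => i2 l]
    simp only [integral_mul_const]
    rfl
  -- `hcvGf` shows that `G·c + G∗f` solves the equation of `y`, so the difference is homogeneous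
  have := volterra_unique (w := fun j k x => y j k x -
      (∑ l, G j l x * c l k + ∑ l, cv (G j l) (f l k) x)) hC0 hC hψ0
    (fun j k => (hy j k).sub ((hzc j k).add (hzf j k))) ?_ ?_ j k x hx
  · linarith
  · intro j k x hx
    simp [hy0 j k x hx, hG0 _ _ x hx, cv_eq_zero_of_neg (hG0 _ _) (hf0 _ _) hx]
  · intro j k x hx
    have e1 : ∑ l, G j l x * c l k = c j k + ∑ m, ∑ l, cv (ψ j m) (G m l) x * c l k := by
      rw [Finset.sum_comm]
      simp only [fun l => hGeq j l x hx, add_mul, Finset.sum_add_distrib, Finset.sum_mul]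
      simp [Matrix.one_apply]
    have e2 : ∑ l, cv (G j l) (f l k) x = (∫ u in Set.Iic x, f j k u) +
        ∑ m, ∑ l, cv (ψ j m) (cv (G m l) (f l k)) x := by
      rw [Finset.sum_comm]
      simp only [hcvGf, Finset.sum_add_distrib]
      simp [Matrix.one_apply]
    simp only [hlin, Finset.sum_sub_distrib, Finset.sum_add_distrib]
    rw [e1, e2, hyeq j k x hx]
    ring

/-! ### The flow identity -/

/-- For a `d×d` matrix of finite signed measures `φ` on `[0,∞)` (represented by its Jordan
parts `φp`, `φm`) and an integrable kernel `g` satisfying `g(t) = I + ∫₀ᵗ (φ∗g)(u) du`, one has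
`g(t) = g(t−s)g(s) + ∫ₛᵗ g(t−u)(φ∗(g·1_{[0,s]}))(u) du` for all `0 ≤ s < t`. -/
theorem stmt13 (d : ℕ) (hd : 1 ≤ d)
    (φp φm : Fin d → Fin d → Measure ℝ)
    [∀ j k, IsFiniteMeasure (φp j k)] [∀ j k, IsFiniteMeasure (φm j k)]
    (hconc : ∀ j k, φp j k (Set.Iio 0) = 0 ∧ φm j k (Set.Iio 0) = 0)
    (g : ℝ → Matrix (Fin d) (Fin d) ℝ)
    (hmeas : ∀ j k, Measurable fun t => g t j k)
    (hint : ∀ j k, IntegrableOn (fun t => g t j k) (Set.Ici 0))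
    (hzero : ∀ t : ℝ, t < 0 → g t = 0)
    (conv : ℝ → Matrix (Fin d) (Fin d) ℝ)
    (hconv : ∀ (u : ℝ) (j k : Fin d), conv u j k =
      ∑ l : Fin d,
        ((∫ v in Set.Icc 0 u, g (u - v) l k ∂(φp j l)) -
         (∫ v in Set.Icc 0 u, g (u - v) l k ∂(φm j l))))
    (heq : ∀ t : ℝ, 0 ≤ t → ∀ j k,
      g t j k = (1 : Matrix (Fin d) (Fin d) ℝ) j k + ∫ u in (0 : ℝ)..t, conv u j k)
    (s t : ℝ) (hs : 0 ≤ s) (hst : s < t)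
    (convs : ℝ → Matrix (Fin d) (Fin d) ℝ)
    (hconvs : ∀ (u : ℝ) (j k : Fin d), convs u j k =
      ∑ l : Fin d,
        ((∫ v in Set.Icc 0 u, Set.indicator (Set.Icc 0 s) g (u - v) l k ∂(φp j l)) -
         (∫ v in Set.Icc 0 u, Set.indicator (Set.Icc 0 s) g (u - v) l k ∂(φm j l)))) :
    ∀ j k, g t j k = (∑ l : Fin d, g (t - s) j l * g s l k) +
      ∫ u in s..t, ∑ l : Fin d, g (t - u) j l * convs u l k := by
  intro j k
  set ψ : Fin d → Fin d → ℝ → ℝ := fun j l => cumul (φp j l) (φm j l) with hψdef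
  set G : Fin d → Fin d → ℝ → ℝ := fun j k x => g x j k with hGdef
  set gs : Fin d → Fin d → ℝ → ℝ := fun j k => (Set.Icc 0 s).indicator (G j k) with hgsdef
  set f : Fin d → Fin d → ℝ → ℝ := fun j k => (Set.Ici 0).indicator fun r => convs (s + r) j k
    with hfdef
  set y : Fin d → Fin d → ℝ → ℝ := fun j k => (Set.Ici 0).indicator fun r => g (s + r) j k
    with hydef
  set C : ℝ := ∑ j, ∑ l, ((φp j l).real Set.univ + (φm j l).real Set.univ) with hCdef
  have hψm : ∀ j l, Measurable (ψ j l) := fun j l => measurable_cumul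
  have hnn : ∀ j l, 0 ≤ (φp j l).real Set.univ + (φm j l).real Set.univ := fun j l =>
    add_nonneg measureReal_nonneg measureReal_nonneg
  have hC0 : 0 ≤ C := Finset.sum_nonneg fun j _ => Finset.sum_nonneg fun l _ => hnn j l
  have hC : ∀ j l x, |ψ j l x| ≤ C := fun j l x =>
    (abs_cumul_le x).trans ((Finset.single_le_sum (fun l _ => hnn j l) (Finset.mem_univ l)).trans
      (Finset.single_le_sum (f := fun j => ∑ l, ((φp j l).real Set.univ + (φm j l).real Set.univ))
        (fun j _ => Finset.sum_nonneg fun l _ => hnn j l) (Finset.mem_univ j)))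
  have hψ0 : ∀ j l, ∀ x < 0, ψ j l x = 0 := fun j l x hx =>
    cumul_of_neg (hconc j l).1 (hconc j l).2 hx
  have hG0 : ∀ j k, ∀ x < 0, G j k x = 0 := fun j k x hx => by simp [hGdef, hzero x hx]
  have hG : ∀ j k, Integrable (G j k) := by
    intro j k
    refine (integrableOn_iff_integrable_of_support_subset fun x hx => ?_).1 (hint j k)
    by_contra hneg
    exact hx (hG0 j k x (not_le.1 hneg))
  have hgs : ∀ j k, Integrable (gs j k) := fun j k => (hG j k).indicator measurableSet_Icc
  have hgs0 : ∀ j k, ∀ x < 0, gs j k x = 0 := fun j k x hx =>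
    Set.indicator_of_notMem (fun h => not_le.2 hx h.1) _
  have hconv' : ∀ j k, (fun u => conv u j k) = fun u => ∑ l, sconv (φp j l) (φm j l) (G l k) u := by
    intro j k; ext u; exact hconv u j k
  have hconvs' : ∀ j k, (fun u => convs u j k) =
      fun u => ∑ l, sconv (φp j l) (φm j l) (gs l k) u := by
    intro j k; ext u; rw [hconvs u j k]
    refine Finset.sum_congr rfl fun l _ => ?_
    have : ∀ x, Set.indicator (Set.Icc 0 s) g x l k = gs l k x := by
      intro x
      by_cases hx : x ∈ Set.Icc 0 s <;> simp [hgsdef, hGdef, hx]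
    simp only [this, sconv]
  have hsG : ∀ j l k, Integrable (sconv (φp j l) (φm j l) (G l k)) := fun j l k =>
    integrable_sconv (hconc j l).1 (hconc j l).2 (hG l k) (hG0 l k)
  have hsgs : ∀ j l k, Integrable (sconv (φp j l) (φm j l) (gs l k)) := fun j l k =>
    integrable_sconv (hconc j l).1 (hconc j l).2 (hgs l k) (hgs0 l k)
  have hconvs_int : ∀ j k, Integrable fun u => convs u j k := by
    intro j k; rw [hconvs']; exact integrable_finsetSum _ fun l _ => hsgs j l k
  have hconvs_Iic : ∀ j k x, ∫ u in Set.Iic x, convs u j k = ∑ l, cv (ψ j l) (gs l k) x := by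
    intro j k x
    rw [hconvs', integral_finsetSum _ fun l _ => (hsgs j l k).integrableOn]
    exact Finset.sum_congr rfl fun l _ =>
      integral_sconv (hconc j l).1 (hconc j l).2 (hgs l k) (hgs0 l k) x
  have hGeq : ∀ j k x, 0 ≤ x →
      G j k x = (1 : Matrix (Fin d) (Fin d) ℝ) j k + ∑ m, cv (ψ j m) (G m k) x := by
    intro j k x hx
    change g x j k = _
    rw [heq x hx j k, hconv', ← setIntegral_Iic_of_neg_zero
      (integrable_finsetSum _ fun l _ => hsG j l k)
      (fun r hr => Finset.sum_eq_zero fun l _ => sconv_of_neg _ hr),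
      integral_finsetSum _ fun l _ => (hsG j l k).integrableOn]
    congr 1
    exact Finset.sum_congr rfl fun l _ =>
      integral_sconv (hconc j l).1 (hconc j l).2 (hG l k) (hG0 l k) x
  have hf : ∀ j k, Integrable (f j k) := fun j k =>
    ((hconvs_int j k).comp_add_left s).indicator measurableSet_Ici
  have hf0 : ∀ j k, ∀ x < 0, f j k x = 0 := fun j k x hx =>
    Set.indicator_of_notMem (fun h => not_le.2 hx h) _
  have hy : ∀ j k, Integrable (y j k) := fun j k =>
    ((hG j k).comp_add_left s).indicator measurableSet_Ici
  have hy0 : ∀ j k, ∀ x < 0, y j k x = 0 := fun j k x hx =>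
    Set.indicator_of_notMem (fun h => not_le.2 hx h) _
  have hfI : ∀ j k x, 0 ≤ x → ∫ u in Set.Iic x, f j k u =
      ∑ l, cv (ψ j l) (gs l k) (s + x) - ∑ l, cv (ψ j l) (gs l k) s := by
    intro j k x hx
    rw [setIntegral_Iic_of_neg_zero (hf j k) (hf0 j k), ← hconvs_Iic, ← hconvs_Iic,
      intervalIntegral.integral_Iic_sub_Iic (hconvs_int j k).integrableOn
        (hconvs_int j k).integrableOn]
    have : ∫ u in (0:ℝ)..x, f j k u = ∫ u in (0:ℝ)..x, convs (s + u) j k := by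
      refine intervalIntegral.integral_congr fun u hu => ?_
      rw [Set.uIcc_of_le hx] at hu
      exact Set.indicator_of_mem (Set.mem_Ici.2 hu.1) _
    rw [this, intervalIntegral.integral_comp_add_left (fun u => convs u j k) s, add_zero]
  -- `g = g·1_{[0,s]} + y(· - s)` except at `u = s`, where both summands contribute `g(s)`
  have hsplit : ∀ j m k x, cv (ψ j m) (G m k) (s + x) =
      cv (ψ j m) (gs m k) (s + x) + cv (ψ j m) (y m k) x := by
    intro j m k x
    have h1 : cv (ψ j m) (y m k) x = ∫ u, ψ j m (s + x - u) * y m k (u - s) := by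
      unfold cv
      rw [← integral_sub_right_eq_self _ s]
      congr 1; ext u
      congr 2; ring
    rw [h1]
    unfold cv
    rw [← integral_add (integrable_cv_integrand (hψm j m) (hC j m) (hgs m k) _)
      (integrable_cv_integrand (b := fun u => y m k (u - s)) (hψm j m) (hC j m)
        ((hy m k).comp_sub_right s) _)]
    refine integral_congr_ae ?_
    have hne : ∀ᵐ u : ℝ, u ≠ s := by simp [ae_iff, measure_singleton]
    filter_upwards [hne] with u hu
    rw [← mul_add]
    congr 1
    rcases lt_or_gt_of_ne hu with hlt | hgt
    · rw [hy0 m k (u - s) (by linarith), add_zero]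
      rcases lt_or_ge u 0 with hu0 | hu0
      · rw [hG0 m k u hu0, hgs0 m k u hu0]
      · exact (Set.indicator_of_mem (Set.mem_Icc.2 ⟨hu0, hlt.le⟩) _).symm
    · have e1 : gs m k u = 0 := Set.indicator_of_notMem (fun h => not_le.2 hgt h.2) _
      have e2 : y m k (u - s) = g (s + (u - s)) m k :=
        Set.indicator_of_mem (Set.mem_Ici.2 (by linarith)) _
      rw [e1, e2, zero_add, add_sub_cancel]
  -- `ψ(s - u)` vanishes for `u > s`, so truncating `g` at `s` does not matter
  have hats : ∀ j m k, cv (ψ j m) (gs m k) s = cv (ψ j m) (G m k) s := by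
    intro j m k
    unfold cv
    congr 1; ext u
    rcases lt_or_ge s u with hu | hu
    · rw [hψ0 j m (s - u) (by linarith)]; simp
    · congr 1
      rcases lt_or_ge u 0 with hu0 | hu0
      · rw [hG0 m k u hu0, hgs0 m k u hu0]
      · exact Set.indicator_of_mem (Set.mem_Icc.2 ⟨hu0, hu⟩) _
  have hyeq : ∀ j k x, 0 ≤ x →
      y j k x = G j k s + (∫ u in Set.Iic x, f j k u) + ∑ m, cv (ψ j m) (y m k) x := by
    intro j k x hx
    have e : y j k x = G j k (s + x) := Set.indicator_of_mem (Set.mem_Ici.2 hx) _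
    rw [e, hGeq j k (s + x) (by linarith), hGeq j k s hs, hfI j k x hx]
    simp only [hsplit, hats, Finset.sum_add_distrib]
    ring
  have hmain := variation_of_constants hψm hC0 hC hψ0 hmeas hG hG0 hGeq hf hf0 hy hy0
    (fun j k => G j k s) hyeq j k (t - s) (by linarith)
  have e : y j k (t - s) = g t j k := by
    have : y j k (t - s) = g (s + (t - s)) j k :=
      Set.indicator_of_mem (Set.mem_Ici.2 (by linarith)) _
    rw [this, add_sub_cancel]
  rw [← e, hmain]
  congr 1
  -- `g` is bounded, being `I` plus the convolution of a bounded with an integrable function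
  have hGb : ∀ l x, |G j l x| ≤ 1 + ∑ m, C * ∫ u, |G m l u| := by
    intro l x
    have hS : 0 ≤ ∑ m, C * ∫ u, |G m l u| := Finset.sum_nonneg fun m _ =>
      mul_nonneg hC0 (integral_nonneg fun u => abs_nonneg _)
    rcases lt_or_ge x 0 with hx | hx
    · rw [hG0 j l x hx, abs_zero]; linarith
    · rw [hGeq j l x hx]
      refine (abs_add_le _ _).trans (add_le_add ?_ ((Finset.abs_sum_le_sum_abs _ _).trans
        (Finset.sum_le_sum fun m _ => abs_cv_le (hC j m) (hG m l) x)))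
      rw [Matrix.one_apply]
      split_ifs <;> simp
  have hi : ∀ l, Integrable fun u => G j l (t - u) * convs u l k := fun l =>
    integrable_cv_integrand (hmeas j l) (hGb l) (hconvs_int l k) t
  have hi' : ∀ l, Integrable fun u => G j l (t - s - u) * f l k u := fun l =>
    integrable_cv_integrand (hmeas j l) (hGb l) (hf l k) (t - s)
  change _ = ∫ u in s..t, ∑ l, G j l (t - u) * convs u l k
  rw [intervalIntegral.integral_finsetSum fun l _ => (hi l).intervalIntegrable]
  refine Finset.sum_congr rfl fun l _ => ?_
  have h1 : cv (G j l) (f l k) (t - s) = ∫ u in Set.Iic (t - s), G j l (t - s - u) * f l k u := by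
    refine (setIntegral_eq_integral_of_forall_compl_eq_zero fun u hu => ?_).symm
    rw [hG0 j l _ (by simp at hu; linarith), zero_mul]
  rw [h1, setIntegral_Iic_of_neg_zero (hi' l) fun u hu => by rw [hf0 l k u hu, mul_zero]]
  have h2 : ∫ u in (0:ℝ)..(t - s), G j l (t - s - u) * f l k u =
      ∫ u in (0:ℝ)..(t - s), (fun r => G j l (t - r) * convs r l k) (s + u) := by
    refine intervalIntegral.integral_congr fun u hu => ?_
    rw [Set.uIcc_of_le (by linarith)] at hu
    have : f l k u = convs (s + u) l k := Set.indicator_of_mem (Set.mem_Ici.2 hu.1) _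
    simp only [this, sub_sub]
  rw [h2, intervalIntegral.integral_comp_add_left (fun r => G j l (t - r) * convs r l k) s,
    add_zero, add_sub_cancel]
end

section
/- Let d ≥ 1 and let φ = (φ_{jk}) be a d×d matrix of finite signed Borel measures on [0,∞), and define h_φ(z) = z·I − ∫_{[0,∞)} e^{−zt} dφ(t) for Re z ≥ 0. For ε > 0 let φ_ε be the matrix measure given by φ_ε(B) = φ(B ∩ {0}) + φ(B ∩ (ε,∞)) for Borel sets B, and let h_{φ_ε} be its associated function. If det h_φ(z) ≠ 0 for every z ∈ ℂ with Re z ≥ 0, then there exists ε* > 0 such that for every ε ∈ (0, ε*] and every z ∈ ℂ with Re z ≥ 0, det h_{φ_ε}(z) ≠ 0. -/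
/-!
The proof is by compactness. If the claim fails, there are `ε n → 0⁺` and `z n` in the closed right
half-plane with `det h_{φ_{ε n}} (z n) = 0`. The Laplace transforms are bounded there by the total
masses, uniformly in `ε` (`norm_setLaplace_le`), so `h_{φ_ε} z` is strictly diagonally dominant for
`‖z‖` large, and the `z n` stay in a fixed ball (`norm_le_of_det_eq_zero`). Along a subsequence
`z n → w` with `0 ≤ re w`, and dominated convergence, varying `ε` and `z` simultaneously, gives
`h_{φ_{ε n}} (z n) → h_φ w` (`tendsto_setLaplace`). Continuity of the determinant then yields
`det h_φ w = 0`, a contradiction.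
-/

open MeasureTheory

lemma norm_exp_neg_mul_le_one {z : ℂ} (hz : 0 ≤ z.re) {t : ℝ} (ht : 0 ≤ t) :
    ‖Complex.exp (-(z * (t : ℂ)))‖ ≤ 1 := by
  rw [Complex.norm_exp, Real.exp_le_one_iff]
  simpa using mul_nonneg hz ht

lemma ae_nonneg_of_Iio_null {μ : Measure ℝ} (hμ : μ (Set.Iio 0) = 0) : ∀ᵐ t ∂μ, 0 ≤ t := by
  rw [ae_iff]
  simpa [Set.Iio] using hμ

lemma norm_setLaplace_le {μ : Measure ℝ} [IsFiniteMeasure μ] (hμ : μ (Set.Iio 0) = 0)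
    (S : Set ℝ) {z : ℂ} (hz : 0 ≤ z.re) :
    ‖∫ t in S, Complex.exp (-(z * (t : ℂ))) ∂μ‖ ≤ μ.real Set.univ := by
  have h : ∀ᵐ t : ℝ ∂(μ.restrict S), ‖Complex.exp (-(z * (t : ℂ)))‖ ≤ 1 := by
    filter_upwards [ae_restrict_of_ae (ae_nonneg_of_Iio_null hμ)] with t ht
    exact norm_exp_neg_mul_le_one hz ht
  refine (norm_integral_le_of_norm_le_const h).trans ?_
  rw [one_mul, measureReal_restrict_apply_univ]
  exact measureReal_mono (Set.subset_univ S)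

/-- Joint continuity of the truncated Laplace transform as `ε → 0⁺` and `z → w`: only the mass on
`(0, ε]` is removed, and no point belongs to that interval for all small `ε`. -/
lemma tendsto_setLaplace {μ : Measure ℝ} [IsFiniteMeasure μ] (hμ : μ (Set.Iio 0) = 0)
    {ε : ℕ → ℝ} (hε : Filter.Tendsto ε Filter.atTop (nhds 0))
    {z : ℕ → ℂ} (hz : ∀ n, 0 ≤ (z n).re) {w : ℂ} (hw : Filter.Tendsto z Filter.atTop (nhds w)) :
    Filter.Tendsto
      (fun n => ∫ t in ({0} : Set ℝ) ∪ Set.Ioi (ε n), Complex.exp (-(z n * (t : ℂ))) ∂μ)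
      Filter.atTop (nhds (∫ t : ℝ, Complex.exp (-(w * (t : ℂ))) ∂μ)) := by
  have hS : ∀ n, MeasurableSet (({0} : Set ℝ) ∪ Set.Ioi (ε n)) := fun n =>
    (measurableSet_singleton 0).union measurableSet_Ioi
  simp_rw [← integral_indicator (hS _)]
  refine tendsto_integral_of_dominated_convergence (fun _ => (1 : ℝ)) ?_ (integrable_const _) ?_ ?_
  · intro n
    exact (Continuous.aestronglyMeasurable (by fun_prop)).indicator (hS n)
  · intro n
    filter_upwards [ae_nonneg_of_Iio_null hμ] with t ht
    exact (norm_indicator_le_norm_self _ _).trans (norm_exp_neg_mul_le_one (hz n) ht)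
  · filter_upwards [ae_nonneg_of_Iio_null hμ] with t ht
    have hmem : ∀ᶠ n in Filter.atTop, t ∈ ({0} : Set ℝ) ∪ Set.Ioi (ε n) := by
      rcases ht.eq_or_lt with h | h
      · exact Filter.Eventually.of_forall fun n => Or.inl h.symm
      · filter_upwards [hε.eventually_lt_const h] with n hn
        exact Or.inr hn
    have hlim : Filter.Tendsto (fun n => Complex.exp (-(z n * (t : ℂ)))) Filter.atTop
        (nhds (Complex.exp (-(w * (t : ℂ))))) :=
      (Complex.continuous_exp.tendsto _).comp (hw.mul_const _).neg
    refine hlim.congr' ?_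
    filter_upwards [hmem] with n hn
    rw [Set.indicator_of_mem hn]

/-- An eigenvalue of `A` is bounded by any common bound on the absolute row sums of `A`, since
otherwise `z • 1 - A` is strictly diagonally dominant. -/
lemma norm_le_of_det_eq_zero {d : ℕ} {A : Matrix (Fin d) (Fin d) ℂ} {B : ℝ}
    (hB : ∀ j, ∑ k, ‖A j k‖ ≤ B) {z : ℂ}
    (hz : (z • (1 : Matrix (Fin d) (Fin d) ℂ) - A).det = 0) : ‖z‖ ≤ B := by
  by_contra! hlt
  refine det_ne_zero_of_sum_row_lt_diag (fun j => ?_) hz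
  have hoff : ∑ k ∈ Finset.univ.erase j, ‖(z • (1 : Matrix (Fin d) (Fin d) ℂ) - A) j k‖ =
      ∑ k ∈ Finset.univ.erase j, ‖A j k‖ := by
    refine Finset.sum_congr rfl fun k hk => ?_
    have hne : j ≠ k := (Finset.ne_of_mem_erase hk).symm
    simp [Matrix.one_apply_ne hne]
  have hdiag : (z • (1 : Matrix (Fin d) (Fin d) ℂ) - A) j j = z - A j j := by simp
  rw [hoff, hdiag]
  have hsum := Finset.add_sum_erase Finset.univ (fun k => ‖A j k‖) (Finset.mem_univ j)
  have htri := norm_sub_norm_le z (A j j)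
  have hBj := hB j
  linarith

/-- If `det h_φ(z) ≠ 0` on `{Re z ≥ 0}` for a `d×d` matrix of finite signed measures `φ` on
`[0,∞)` (represented by its Jordan parts `φp`, `φm`), then there is `ε* > 0` such that for all
`ε ∈ (0, ε*]` the truncated measure `φ_ε = φ(·∩{0}) + φ(·∩(ε,∞))` also satisfies
`det h_{φ_ε}(z) ≠ 0` on `{Re z ≥ 0}`. -/
theorem stmt15 (d : ℕ) (hd : 1 ≤ d)
    (φp φm : Fin d → Fin d → Measure ℝ)
    [∀ j k, IsFiniteMeasure (φp j k)] [∀ j k, IsFiniteMeasure (φm j k)]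
    (hconc : ∀ j k, φp j k (Set.Iio 0) = 0 ∧ φm j k (Set.Iio 0) = 0)
    (H : ℂ → Matrix (Fin d) (Fin d) ℂ)
    (hH : ∀ z : ℂ, H z = z • (1 : Matrix (Fin d) (Fin d) ℂ) -
      Matrix.of (fun j k =>
        (∫ t : ℝ, Complex.exp (-(z * (t : ℂ))) ∂(φp j k)) -
        (∫ t : ℝ, Complex.exp (-(z * (t : ℂ))) ∂(φm j k))))
    (Hε : ℝ → ℂ → Matrix (Fin d) (Fin d) ℂ)
    (hHε : ∀ (ε : ℝ) (z : ℂ), Hε ε z = z • (1 : Matrix (Fin d) (Fin d) ℂ) -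
      Matrix.of (fun j k =>
        (∫ t in ({0} : Set ℝ) ∪ Set.Ioi ε, Complex.exp (-(z * (t : ℂ))) ∂(φp j k)) -
        (∫ t in ({0} : Set ℝ) ∪ Set.Ioi ε, Complex.exp (-(z * (t : ℂ))) ∂(φm j k))))
    (hdet : ∀ z : ℂ, 0 ≤ z.re → (H z).det ≠ 0) :
    ∃ εs : ℝ, 0 < εs ∧ ∀ ε : ℝ, 0 < ε → ε ≤ εs →
      ∀ z : ℂ, 0 ≤ z.re → (Hε ε z).det ≠ 0 := by
  by_contra! hcon
  choose e he0 he1 z hz hzero using fun n : ℕ => hcon (1 / ((n : ℝ) + 1)) (by positivity)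
  have he : Filter.Tendsto e Filter.atTop (nhds 0) :=
    squeeze_zero (fun n => (he0 n).le) he1 tendsto_one_div_add_atTop_nhds_zero_nat
  have hbound : ∀ n, ‖z n‖ ≤
      ∑ j, ∑ k, ((φp j k).real Set.univ + (φm j k).real Set.univ) := by
    intro n
    have hdet0 := hzero n
    rw [hHε] at hdet0
    refine norm_le_of_det_eq_zero (fun j => ?_) hdet0
    refine le_trans (Finset.sum_le_sum fun k _ => ?_)
      (Finset.single_le_sum
        (f := fun j => ∑ k, ((φp j k).real Set.univ + (φm j k).real Set.univ))
        (fun j _ => Finset.sum_nonneg fun k _ => by positivity) (Finset.mem_univ j))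
    exact (norm_sub_le _ _).trans (add_le_add (norm_setLaplace_le (hconc j k).1 _ (hz n))
      (norm_setLaplace_le (hconc j k).2 _ (hz n)))
  obtain ⟨w, -, s, hs, hw⟩ := tendsto_subseq_of_bounded Metric.isBounded_closedBall
    (fun n => mem_closedBall_zero_iff.mpr (hbound n))
  have hwre : 0 ≤ w.re :=
    ge_of_tendsto' ((Complex.continuous_re.tendsto w).comp hw) fun n => hz (s n)
  have hlim : Filter.Tendsto (fun n => Hε (e (s n)) (z (s n))) Filter.atTop (nhds (H w)) := by
    simp_rw [hHε, hH]
    refine (hw.smul_const _).sub ?_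
    refine tendsto_pi_nhds.mpr fun j => tendsto_pi_nhds.mpr fun k => ?_
    have hes := he.comp hs.tendsto_atTop
    exact (tendsto_setLaplace (hconc j k).1 hes (fun n => hz (s n)) hw).sub
      (tendsto_setLaplace (hconc j k).2 hes (fun n => hz (s n)) hw)
  have hdetlim : Filter.Tendsto (fun n => (Hε (e (s n)) (z (s n))).det) Filter.atTop
      (nhds (H w).det) :=
    ((continuous_id.matrix_det).tendsto (H w)).comp hlim
  simp_rw [hzero] at hdetlim
  exact hdet w hwre (tendsto_nhds_unique hdetlim tendsto_const_nhds)
end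

section
/- Let ξ ∈ ℝ with ξ < 1 and define h(x) = x + 1 − ξ e^{−x} for x in a neighbourhood of 0. Then h(0) = 1 − ξ > 0, the function x ↦ 1/h(x) is twice differentiable at 0, and its second derivative at 0 equals (ξ² + 5ξ + 2)/(1 − ξ)³. In particular, if ξ² + 5ξ + 2 < 0 (for example ξ = −0.8), then the second derivative of 1/h at 0 is strictly negative, so 1/h is not completely monotone on [0,∞). -/
/-!
Since `h' = 1 + ξe^{-x}` and `h'' = -ξe^{-x}`, the quotient rule gives
`(1/h)'' = (2h'² - h h'')/h³` wherever `h ≠ 0`. At `0` the numerator is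
`2(1 + ξ)² + ξ(1 - ξ) = ξ² + 5ξ + 2` and `h 0 = 1 - ξ > 0`. If the numerator is negative, the
sign condition of complete monotonicity already fails for `n = 2` at the point `0`.
-/

/-- For `ξ < 1` and `h(x) = x + 1 − ξe^{−x}`: `h(0) = 1 − ξ > 0`, `1/h` is twice
differentiable at `0` with second derivative `(ξ² + 5ξ + 2)/(1 − ξ)³` there; in particular, if
`ξ² + 5ξ + 2 < 0`, then `1/h` is not completely monotone on `[0,∞)`. -/
theorem stmt16 (ξ : ℝ) (hξ : ξ < 1)
    (h : ℝ → ℝ) (hdef : ∀ x : ℝ, h x = x + 1 - ξ * Real.exp (-x)) :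
    h 0 = 1 - ξ ∧ 0 < 1 - ξ ∧
    ContDiffAt ℝ 2 (fun x => 1 / h x) 0 ∧
    iteratedDeriv 2 (fun x => 1 / h x) 0 = (ξ ^ 2 + 5 * ξ + 2) / (1 - ξ) ^ 3 ∧
    (ξ ^ 2 + 5 * ξ + 2 < 0 →
      ¬ (∀ (n : ℕ) (x : ℝ), 0 ≤ x →
          0 ≤ (-1 : ℝ) ^ n * iteratedDeriv n (fun x => 1 / h x) x)) := by
  have hh : h = fun x => x + 1 - ξ * Real.exp (-x) := funext hdef
  have hpos : 0 < 1 - ξ := by linarith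
  have h0 : h 0 = 1 - ξ := by simp [hdef]
  have hexp : ∀ x : ℝ, HasDerivAt (fun y : ℝ => ξ * Real.exp (-y)) (-(ξ * Real.exp (-x))) x := by
    intro x
    exact ((hasDerivAt_neg x).exp.const_mul ξ).congr_deriv (by ring)
  have hd : ∀ x : ℝ, HasDerivAt h (1 + ξ * Real.exp (-x)) x := by
    intro x
    rw [hh]
    exact (((hasDerivAt_id x).add_const (1 : ℝ)).sub (hexp x)).congr_deriv (by ring)
  have hne0 : h 0 ≠ 0 := by rw [h0]; exact hpos.ne'
  have hC : ContDiffAt ℝ 2 (fun x => 1 / h x) 0 := by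
    refine contDiffAt_const.div ?_ hne0
    rw [hh]
    fun_prop
  -- The formula for `(1/h)'` is only available where `h ≠ 0`, hence eventually near `0`.
  have hne : ∀ᶠ x in nhds (0 : ℝ), h x ≠ 0 :=
    (hd 0).continuousAt.eventually_ne hne0
  have hderiv : deriv (fun x => 1 / h x) =ᶠ[nhds 0]
      fun x => -(1 + ξ * Real.exp (-x)) / h x ^ 2 := by
    filter_upwards [hne] with x hx
    simpa only [one_div] using ((hd x).fun_inv hx).deriv
  have hsecond : iteratedDeriv 2 (fun x => 1 / h x) 0 = (ξ ^ 2 + 5 * ξ + 2) / (1 - ξ) ^ 3 := by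
    rw [iteratedDeriv_succ, iteratedDeriv_one, hderiv.deriv_eq]
    have hnum : HasDerivAt (fun x : ℝ => -(1 + ξ * Real.exp (-x))) (ξ * Real.exp (-0)) 0 := by
      exact ((hexp 0).const_add (1 : ℝ)).fun_neg.congr_deriv (by ring)
    rw [(hnum.fun_div ((hd 0).fun_pow 2) (pow_ne_zero 2 hne0)).deriv, h0]
    have hpos' := hpos.ne'
    simp only [neg_zero, Real.exp_zero]
    field_simp
    push_cast
    ring
  refine ⟨h0, hpos, hC, hsecond, fun hneg hcm => ?_⟩
  have h2 := hcm 2 0 le_rfl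
  rw [hsecond] at h2
  have := div_neg_of_neg_of_pos hneg (pow_pos hpos 3)
  linarith
end
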